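/- Let H be one of the graphs house, hammer, diamond, let 𝒞 be the class of (bull, H)-free graphs, let 𝒢 be a hereditary class of graphs, and let ℋ be the class of triangle-free graphs. Then every graph in 𝒢 ∩ 𝒞 is perfectly divisible if and only if every graph in 𝒢 ∩ ℋ is perfectly divisible. -/

import Mathlib

/-!
The class of triangle-free graphs consists of (bull, `H`)-free graphs, which is one direction. For
the other, every nonempty set `s` of vertices of a (bull, `H`)-free graph `G` is shown to be
divisible for *all* positive vertex weights (`BullDiv.div_all`), by induction on `|s|`. Weights make
three reductions available:

* if some vertex `v` of `s` has a perfect non-neighbourhood in `s`, take `v` and its non-neighbours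
  as the perfect part (`div_of_anti`);
* a simplicial vertex can be added to the perfect part of a division of the rest
  (`div_of_simplicial`);
* a homogeneous set can be shrunk to a vertex carrying its clique weight, by Lovász's substitution
  lemma (`div_of_homogeneous`, `perfOn_subst`).

If none applies, `G[s]` is prime, has no simplicial vertex, and every vertex `t` is anticomplete to
an imperfect induced subgraph. A minimal one, `Q`, is itself prime without simplicial vertices and
not bipartite (`exists_core`). It is then enough that `G[s]` is triangle-free: the hypothesis
divides it into a perfect part and a stable part, and a single vertex is lighter than an edge
(`div_of_triFree`).

Triangle-freeness rests on the centre–anticentre lemma (`no_center`): in a prime bull-free graph no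
copy of `Q` has both a vertex complete to it and a vertex anticomplete to it. Hence a vertex with an
anticentre as neighbour sees a stable set of the copy (`stab`). For `H` the hammer this rules out
triangles through anticentres (`hammer_case`); for the diamond, a triangle forces the
non-neighbours of one of its vertices to form a clique, which is no place for `Q` (`diamond_case`);
for the house, no vertex sees an edge of the copy, so the vertices of the copy lie in no triangle,
and this property spreads along edges (`house_case`).

Perfection is handled through Berge's stable-set characterization `PerfOn`, shown equivalent to
`IsPerfect` in `isPerfect_induce_iff`.
-/

open SimpleGraph

/-- `H` is isomorphic to an induced subgraph of `G`. -/
def ContainsInduced {α β : Type*} (G : SimpleGraph α) (H : SimpleGraph β) : Prop :=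
  ∃ f : β ↪ α, ∀ a b, G.Adj (f a) (f b) ↔ H.Adj a b

/-- `G` is `H`-free: `G` does not contain `H` as an induced subgraph. -/
def IsFree {α β : Type*} (G : SimpleGraph α) (H : SimpleGraph β) : Prop :=
  ¬ ContainsInduced G H

/-- The clique number of the subgraph of `G` induced on `s`. -/
noncomputable def cliqueNumOn {V : Type*} (G : SimpleGraph V) (s : Set V) : ℕ :=
  sSup {n | ∃ t : Finset V, ↑t ⊆ s ∧ G.IsNClique n t}

/-- The maximum `w`-weight of a clique of `G` contained in `s`. -/
noncomputable def wCliqueNumOn {V : Type*} (G : SimpleGraph V) (w : V → ℕ) (s : Set V) : ℕ :=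
  sSup {n | ∃ t : Finset V, ↑t ⊆ s ∧ G.IsClique (↑t : Set V) ∧ ∑ v ∈ t, w v = n}

/-- A graph is perfect if every induced subgraph has chromatic number equal to clique number. -/
def IsPerfect {V : Type*} (G : SimpleGraph V) : Prop :=
  ∀ s : Set V, (G.induce s).chromaticNumber = (cliqueNumOn G s : ℕ∞)

/-- `G` is perfectly divisible: every (nonempty) induced subgraph `H` of `G` admits a partition
`(A, B)` of its vertex set with `H[A]` perfect and `ω(H[B]) < ω(H)`. -/
def PerfectlyDivisible {V : Type*} (G : SimpleGraph V) : Prop :=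
  ∀ s : Set V, s.Nonempty →
    ∃ A B : Set V, A ∪ B = s ∧ A ∩ B = ∅ ∧
      IsPerfect (G.induce A) ∧ cliqueNumOn G B < cliqueNumOn G s

/-- `G` is perfectly weight divisible: for every positive integer weight function `w` and every
(nonempty) induced subgraph `H` of `G`, there is a partition `(P, W)` of its vertex set with
`H[P]` perfect and the maximum weight of a clique of `H[W]` less than that of `H`. -/
def PerfectlyWeightDivisible {V : Type*} (G : SimpleGraph V) : Prop :=
  ∀ w : V → ℕ, (∀ v, 0 < w v) →
    ∀ s : Set V, s.Nonempty →
      ∃ P W : Set V, P ∪ W = s ∧ P ∩ W = ∅ ∧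
        IsPerfect (G.induce P) ∧ wCliqueNumOn G w W < wCliqueNumOn G w s

/-- The bull: a triangle `{0,1,2}` with pendant edges `0-3` and `1-4`. -/
def bull : SimpleGraph (Fin 5) :=
  SimpleGraph.fromEdgeSet {s(0,1), s(0,2), s(1,2), s(0,3), s(1,4)}

/-- The house: the complement of the path on 5 vertices. -/
def house : SimpleGraph (Fin 5) := (SimpleGraph.pathGraph 5)ᶜ

/-- The hammer: a triangle `{0,1,2}` together with the path `2-3-4`. -/
def hammer : SimpleGraph (Fin 5) :=
  SimpleGraph.fromEdgeSet {s(0,1), s(0,2), s(1,2), s(2,3), s(3,4)}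

/-- The diamond: `K₄` minus an edge. -/
def diamond : SimpleGraph (Fin 4) :=
  SimpleGraph.fromEdgeSet {s(0,1), s(0,2), s(0,3), s(1,2), s(1,3)}

/-- The odd torch built on the cycle `C_k` from a set `S` of cycle vertices: two new adjacent
vertices are added, the first adjacent exactly to `S`, the second to no cycle vertex. -/
def oddTorch (k : ℕ) (S : Set (Fin k)) : SimpleGraph (Fin k ⊕ Fin 2) :=
  SimpleGraph.fromRel (fun a b =>
    match a, b with
    | Sum.inl i, Sum.inl j => (SimpleGraph.cycleGraph k).Adj i j
    | Sum.inl i, Sum.inr u => u = 0 ∧ i ∈ S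
    | Sum.inr _, Sum.inl _ => False
    | Sum.inr u, Sum.inr v => u ≠ v)

/-- `G` contains no odd torch as an induced subgraph. -/
def OddTorchFree {V : Type*} (G : SimpleGraph V) : Prop :=
  ∀ (k : ℕ) (S : Set (Fin k)), 5 ≤ k → Odd k → S.Nonempty →
    (∀ i ∈ S, ∀ j ∈ S, ¬ (SimpleGraph.cycleGraph k).Adj i j) →
    IsFree G (oddTorch k S)

/-- `G` is locally perfect: the neighbourhood of each vertex induces a perfect graph. -/
def LocallyPerfect {V : Type*} (G : SimpleGraph V) : Prop :=
  ∀ v : V, IsPerfect (G.induce (G.neighborSet v))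

/-- `N(X)`: vertices outside `X` with a neighbour in `X`. -/
def nbhd {V : Type*} (G : SimpleGraph V) (X : Set V) : Set V :=
  {u | u ∉ X ∧ ∃ x ∈ X, G.Adj u x}

/-- `M(X) = V(G) \ (X ∪ N(X))`: vertices outside `X` with no neighbour in `X`. -/
def antiNbhd {V : Type*} (G : SimpleGraph V) (X : Set V) : Set V :=
  {u | u ∉ X ∧ ∀ x ∈ X, ¬ G.Adj u x}

/-- Minimally non-perfectly divisible. -/
def MNPD {V : Type*} (G : SimpleGraph V) : Prop :=
  ¬ PerfectlyDivisible G ∧ ∀ s : Set V, s ≠ Set.univ → PerfectlyDivisible (G.induce s)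

/-- Minimally non-perfectly weight divisible. -/
def MNWD {V : Type*} (G : SimpleGraph V) : Prop :=
  ¬ PerfectlyWeightDivisible G ∧ ∀ s : Set V, s ≠ Set.univ → PerfectlyWeightDivisible (G.induce s)

namespace BullDiv

/-! ### Weighted clique numbers -/

section cliques
variable {V W : Type*} [Finite V] [Finite W] {G : SimpleGraph V} {H : SimpleGraph W}

lemma w_bddAbove (G : SimpleGraph V) (w : V → ℕ) (s : Set V) :
    BddAbove {n | ∃ t : Finset V, ↑t ⊆ s ∧ G.IsClique (↑t : Set V) ∧ ∑ v ∈ t, w v = n} := by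
  classical
  have := Fintype.ofFinite V
  refine ⟨∑ v, w v, ?_⟩
  rintro n ⟨t, -, -, rfl⟩
  exact Finset.sum_le_sum_of_subset (Finset.subset_univ t)

lemma w_le {w : V → ℕ} {s : Set V} {t : Finset V} (hts : (t : Set V) ⊆ s)
    (ht : G.IsClique (t : Set V)) : ∑ v ∈ t, w v ≤ wCliqueNumOn G w s :=
  le_csSup (w_bddAbove G w s) ⟨t, hts, ht, rfl⟩

lemma w_exists (G : SimpleGraph V) (w : V → ℕ) (s : Set V) :
    ∃ t : Finset V, (t : Set V) ⊆ s ∧ G.IsClique (t : Set V) ∧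
      ∑ v ∈ t, w v = wCliqueNumOn G w s :=
  Nat.sSup_mem (s := {n | ∃ t : Finset V, (t : Set V) ⊆ s ∧ G.IsClique (t : Set V) ∧
    ∑ v ∈ t, w v = n}) ⟨0, ∅, by simp, by simp, by simp⟩ (w_bddAbove G w s)

lemma w_lt {w : V → ℕ} {s : Set V} {n : ℕ}
    (h : ∀ t : Finset V, (t : Set V) ⊆ s → G.IsClique (t : Set V) → ∑ v ∈ t, w v < n) :
    wCliqueNumOn G w s < n := by
  obtain ⟨t, h1, h2, h3⟩ := w_exists G w s
  exact h3 ▸ h t h1 h2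

lemma w_mono (w : V → ℕ) {s s' : Set V} (h : s ⊆ s') :
    wCliqueNumOn G w s ≤ wCliqueNumOn G w s' := by
  obtain ⟨t, h1, h2, h3⟩ := w_exists G w s
  exact h3 ▸ w_le (h1.trans h) h2

omit [Finite V] in
lemma cliqueNumOn_eq_w (G : SimpleGraph V) (s : Set V) :
    cliqueNumOn G s = wCliqueNumOn G (fun _ => 1) s := by
  simp [cliqueNumOn, wCliqueNumOn, SimpleGraph.isNClique_iff]

lemma c_le {s : Set V} {t : Finset V} (hts : (t : Set V) ⊆ s)
    (ht : G.IsClique (t : Set V)) : t.card ≤ cliqueNumOn G s := by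
  rw [cliqueNumOn_eq_w, Finset.card_eq_sum_ones]
  exact w_le hts ht

lemma c_exists (G : SimpleGraph V) (s : Set V) :
    ∃ t : Finset V, (t : Set V) ⊆ s ∧ G.IsClique (t : Set V) ∧ t.card = cliqueNumOn G s := by
  obtain ⟨t, h1, h2, h3⟩ := w_exists G (fun _ => 1) s
  exact ⟨t, h1, h2, by rw [cliqueNumOn_eq_w, ← h3, Finset.card_eq_sum_ones]⟩

lemma c_lt {s : Set V} {n : ℕ}
    (h : ∀ t : Finset V, (t : Set V) ⊆ s → G.IsClique (t : Set V) → t.card < n) :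
    cliqueNumOn G s < n := by
  obtain ⟨t, h1, h2, h3⟩ := c_exists G s
  exact h3 ▸ h t h1 h2

lemma c_mono {s s' : Set V} (h : s ⊆ s') : cliqueNumOn G s ≤ cliqueNumOn G s' := by
  obtain ⟨t, h1, h2, h3⟩ := c_exists G s
  exact h3 ▸ c_le (h1.trans h) h2

lemma c_pos {s : Set V} (h : s.Nonempty) : 0 < cliqueNumOn G s := by
  obtain ⟨v, hv⟩ := h
  have := c_le (G := G) (s := s) (t := {v}) (by simpa using hv) (by simp)
  simp at this
  omega

lemma c_image (e : H ↪g G) (s : Set W) : cliqueNumOn G (e '' s) = cliqueNumOn H s := by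
  classical
  apply le_antisymm
  · obtain ⟨t, h1, h2, h3⟩ := c_exists G (e '' s)
    rw [← h3]
    have himg : (t.preimage e e.injective.injOn).image e = t := by
      rw [Finset.image_preimage]
      refine Finset.filter_true_of_mem fun x hx => ?_
      obtain ⟨y, -, rfl⟩ := h1 hx
      exact ⟨y, rfl⟩
    have hc : (t.preimage e e.injective.injOn).card = t.card := by
      conv_rhs => rw [← himg, Finset.card_image_of_injective _ e.injective]
    rw [← hc]
    apply c_le
    · intro x hx
      have : e x ∈ t := by simpa using hx
      obtain ⟨y, hy, hxy⟩ := h1 this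
      rwa [← e.injective hxy]
    · intro x hx y hy hne
      have hx : e x ∈ t := by simpa using hx
      have hy : e y ∈ t := by simpa using hy
      exact e.map_adj_iff.1 (h2 hx hy (e.injective.ne hne))
  · obtain ⟨t, h1, h2, h3⟩ := c_exists H s
    rw [← h3, ← Finset.card_image_of_injective t e.injective]
    apply c_le
    · rw [Finset.coe_image]; exact Set.image_mono h1
    · rw [Finset.coe_image]
      rintro _ ⟨x, hx, rfl⟩ _ ⟨y, hy, rfl⟩ hne
      exact e.map_adj_iff.2 (h2 hx hy (fun h => hne (h ▸ rfl)))

end cliques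

/-! ### Perfection through stable sets -/

/-- Berge's stable-set form of perfection for the subgraph induced on `A`: every nonempty `s ⊆ A`
contains a stable set meeting all the maximum cliques of `G[s]`. -/
def PerfOn {V : Type*} (G : SimpleGraph V) (A : Set V) : Prop :=
  ∀ s ⊆ A, s.Nonempty → ∃ I ⊆ s, (∀ a ∈ I, ∀ b ∈ I, ¬ G.Adj a b) ∧
    cliqueNumOn G (s \ I) < cliqueNumOn G s

section perf
variable {V W : Type*} [Finite V] [Finite W] {G : SimpleGraph V} {H : SimpleGraph W}

omit [Finite V] in
lemma PerfOn.mono {A B : Set V} (h : PerfOn G B) (hAB : A ⊆ B) : PerfOn G A :=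
  fun s hs hn => h s (hs.trans hAB) hn

lemma perfOn_image (e : H ↪g G) (A : Set W) : PerfOn G (e '' A) ↔ PerfOn H A := by
  constructor
  · intro h s hs hn
    obtain ⟨I, hI, hst, hlt⟩ := h (e '' s) (Set.image_mono hs) (hn.image e)
    refine ⟨e ⁻¹' I, ?_, ?_, ?_⟩
    · intro x hx
      obtain ⟨y, hy, hxy⟩ := hI hx
      rwa [← e.injective hxy]
    · intro a ha b hb hab
      exact hst _ ha _ hb (e.map_adj_iff.2 hab)
    · rw [← c_image e, ← c_image e]
      refine lt_of_le_of_lt (c_mono ?_) hlt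
      rintro _ ⟨x, hx, rfl⟩
      exact ⟨⟨x, hx.1, rfl⟩, hx.2⟩
  · intro h s hs hn
    have hse : e '' (e ⁻¹' s) = s := by
      rw [Set.image_preimage_eq_iff]
      exact hs.trans (Set.image_subset_range _ _)
    obtain ⟨I, hI, hst, hlt⟩ := h (e ⁻¹' s)
      (fun x hx => by obtain ⟨y, hy, hxy⟩ := hs hx; rwa [← e.injective hxy])
      (by rw [← hse] at hn; exact hn.of_image)
    refine ⟨e '' I, ?_, ?_, ?_⟩
    · rw [← hse]; exact Set.image_mono hI
    · rintro _ ⟨a, ha, rfl⟩ _ ⟨b, hb, rfl⟩ hab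
      exact hst _ ha _ hb (e.map_adj_iff.1 hab)
    · rw [← hse, ← Set.image_sdiff e.injective, c_image, c_image]
      exact hlt

/-- Peeling off the stable sets provided by `PerfOn` one at a time colours `G[s]` optimally. -/
lemma PerfOn.coloring {A : Set V} (h : PerfOn G A) :
    ∀ s ⊆ A, ∃ c : V → ℕ, (∀ v ∈ s, c v < cliqueNumOn G s) ∧
      ∀ a ∈ s, ∀ b ∈ s, G.Adj a b → c a ≠ c b := by
  classical
  intro s
  induction hn : s.ncard using Nat.strong_induction_on generalizing s with
  | _ n ih =>
    intro hs
    rcases s.eq_empty_or_nonempty with rfl | hne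
    · exact ⟨fun _ => 0, by simp, by simp⟩
    obtain ⟨I, hI, hst, hlt⟩ := h s hs hne
    have hIne : I.Nonempty := by
      by_contra hemp
      rw [Set.not_nonempty_iff_eq_empty] at hemp
      subst hemp
      simp at hlt
    have hlt' : (s \ I).ncard < n := by
      rw [← hn]
      apply Set.ncard_lt_ncard _ (Set.toFinite _)
      obtain ⟨x, hx⟩ := hIne
      exact ⟨Set.sdiff_subset, fun hc => (hc (hI hx)).2 hx⟩
    obtain ⟨c, hc1, hc2⟩ := ih _ hlt' (s \ I) rfl (Set.sdiff_subset.trans hs)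
    refine ⟨fun v => if v ∈ I then cliqueNumOn G (s \ I) else c v, ?_, ?_⟩
    · intro v hv
      by_cases hvI : v ∈ I
      · simpa [hvI] using hlt
      · simpa [hvI] using (hc1 v ⟨hv, hvI⟩).trans hlt
    · intro a ha b hb hab
      by_cases haI : a ∈ I <;> by_cases hbI : b ∈ I
      · exact absurd hab (hst a haI b hbI)
      · simpa [haI, hbI] using (hc1 b ⟨hb, hbI⟩).ne'
      · simpa [haI, hbI] using (hc1 a ⟨ha, haI⟩).ne
      · simpa [haI, hbI] using hc2 a ⟨ha, haI⟩ b ⟨hb, hbI⟩ hab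

/-- Deleting the colour class of a vertex of an optimally coloured graph drops the clique
number. -/
lemma class_lt {s : Set V} {c : V → ℕ} (hc1 : ∀ v ∈ s, c v < cliqueNumOn G s)
    (hc2 : ∀ a ∈ s, ∀ b ∈ s, G.Adj a b → c a ≠ c b) {v : V} (hv : v ∈ s) :
    cliqueNumOn G (s \ {u | u ∈ s ∧ c u = c v}) < cliqueNumOn G s := by
  classical
  apply c_lt
  intro t hts ht
  have hmem : ∀ u ∈ t, u ∈ s ∧ c u ≠ c v := fun u hu =>
    ⟨(hts hu).1, fun h => (hts hu).2 ⟨(hts hu).1, h⟩⟩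
  have h1 : (t.image c) ⊆ (Finset.range (cliqueNumOn G s)).erase (c v) := by
    intro x hx
    obtain ⟨u, hu, rfl⟩ := Finset.mem_image.1 hx
    simp [(hmem u hu).2, hc1 u (hmem u hu).1]
  have h2 : (t.image c).card = t.card := by
    apply Finset.card_image_of_injOn
    intro a ha b hb hab
    by_contra hne
    exact hc2 a (hmem a ha).1 b (hmem b hb).1 (ht ha hb hne) hab
  have h3 := Finset.card_le_card h1
  rw [Finset.card_erase_of_mem (by simpa using hc1 v hv), h2, Finset.card_range] at h3
  have := c_pos (G := G) ⟨v, hv⟩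
  omega

/-- In a perfect graph the stable set meeting all maximum cliques can be taken through any
prescribed vertex. -/
lemma PerfOn.strong {A : Set V} (h : PerfOn G A) {v : V} (hv : v ∈ A) :
    ∃ I ⊆ A, v ∈ I ∧ (∀ a ∈ I, ∀ b ∈ I, ¬ G.Adj a b) ∧
      cliqueNumOn G (A \ I) < cliqueNumOn G A := by
  obtain ⟨c, hc1, hc2⟩ := h.coloring A subset_rfl
  exact ⟨{u | u ∈ A ∧ c u = c v}, fun u hu => hu.1, ⟨hv, rfl⟩,
    fun a ha b hb hab => hc2 a ha.1 b hb.1 hab (ha.2.trans hb.2.symm), class_lt hc1 hc2 hv⟩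

lemma isPerfect_iff_perfOn_univ : IsPerfect G ↔ PerfOn G Set.univ := by
  classical
  constructor
  · intro h s _ ⟨v, hv⟩
    have hcol : (G.induce s).Colorable (cliqueNumOn G s) :=
      SimpleGraph.chromaticNumber_le_iff_colorable.1 (h s).le
    obtain ⟨C⟩ := hcol
    let c : V → ℕ := fun u => if hu : u ∈ s then (C ⟨u, hu⟩ : ℕ) else 0
    have hc1 : ∀ v ∈ s, c v < cliqueNumOn G s := by
      intro v hv
      simp [c, hv]
    have hc2 : ∀ a ∈ s, ∀ b ∈ s, G.Adj a b → c a ≠ c b := by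
      intro a ha b hb hab hcc
      simp only [c, ha, hb, dif_pos] at hcc
      exact C.valid (v := ⟨a, ha⟩) (w := ⟨b, hb⟩) (by simpa using hab) (Fin.ext hcc)
    exact ⟨{u | u ∈ s ∧ c u = c v}, fun u hu => hu.1,
      fun a ha b hb hab => hc2 a ha.1 b hb.1 hab (ha.2.trans hb.2.symm), class_lt hc1 hc2 hv⟩
  · intro h s
    apply le_antisymm
    · obtain ⟨c, hc1, hc2⟩ := h.coloring s (Set.subset_univ s)
      rw [SimpleGraph.chromaticNumber_le_iff_colorable]
      refine ⟨SimpleGraph.Coloring.mk (fun v => ⟨c v, hc1 v v.2⟩) ?_⟩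
      intro a b hab hcc
      exact hc2 a a.2 b b.2 (by simpa using hab) (by simpa using hcc)
    · obtain ⟨t, h1, h2, h3⟩ := c_exists (G.induce s) Set.univ
      have h4 := c_image (SimpleGraph.Embedding.induce s : G.induce s ↪g G) Set.univ
      have h5 : (SimpleGraph.Embedding.induce s : G.induce s ↪g G) '' Set.univ = s := by
        ext x; simp
      rw [h5] at h4
      rw [h4, ← h3]
      exact h2.card_le_chromaticNumber

lemma isPerfect_induce_iff (A : Set V) : IsPerfect (G.induce A) ↔ PerfOn G A := by
  rw [isPerfect_iff_perfOn_univ,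
    ← perfOn_image (SimpleGraph.Embedding.induce A : G.induce A ↪g G)]
  have h5 : (SimpleGraph.Embedding.induce A : G.induce A ↪g G) '' Set.univ = A := by
    ext x; simp
  rw [h5]

omit [Finite V] in
lemma perfOn_empty : PerfOn G (∅ : Set V) := by
  intro s hs hn
  exact absurd (hn.mono hs) (by simp)

lemma perfOn_insert_isolated {A : Set V} (h : PerfOn G A) {v : V}
    (hv : ∀ a ∈ A, ¬ G.Adj v a) : PerfOn G (insert v A) := by
  intro s hs hn
  by_cases hvs : v ∈ s
  swap
  · exact h s (fun x hx => (hs hx).resolve_left (fun hxv => hvs (hxv ▸ hx))) hn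
  have hsA : s \ {v} ⊆ A := fun x hx => (hs hx.1).resolve_left hx.2
  rcases (s \ {v}).eq_empty_or_nonempty with he | hne
  · refine ⟨{v}, by simpa using hvs, by simp, ?_⟩
    rw [he]
    have h0 : cliqueNumOn G (∅ : Set V) < 1 := by
      apply c_lt
      intro t ht _
      have : t = ∅ := by simpa using ht
      simp [this]
    have := c_pos (G := G) hn
    omega
  · obtain ⟨I, hI, hst, hlt⟩ := h (s \ {v}) hsA hne
    refine ⟨insert v I, Set.insert_subset hvs (hI.trans Set.sdiff_subset), ?_, ?_⟩
    · rintro a (rfl | ha) b (rfl | hb) hab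
      · exact G.loopless.irrefl _ hab
      · exact hv b (hsA (hI hb)) hab
      · exact hv a (hsA (hI ha)) hab.symm
      · exact hst a ha b hb hab
    · refine lt_of_le_of_lt (c_mono ?_) (hlt.trans_le (c_mono Set.sdiff_subset))
      rintro x ⟨hx, hx'⟩
      exact ⟨⟨hx, fun h => hx' (Or.inl h)⟩, fun h => hx' (Or.inr h)⟩

lemma perfOn_insert_simplicial {A : Set V} (h : PerfOn G A) {v : V}
    (hv : ∀ a ∈ A, ∀ b ∈ A, G.Adj v a → G.Adj v b → a ≠ b → G.Adj a b) :
    PerfOn G (insert v A) := by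
  classical
  intro s hs hn
  by_cases hvs : v ∈ s
  swap
  · exact h s (fun x hx => (hs hx).resolve_left (fun hxv => hvs (hxv ▸ hx))) hn
  have hsA : s \ {v} ⊆ A := fun x hx => (hs hx.1).resolve_left hx.2
  by_cases hiso : ∀ a ∈ A, ¬ G.Adj v a
  · exact perfOn_insert_isolated h hiso s hs hn
  rcases (s \ {v}).eq_empty_or_nonempty with he | hne
  · refine perfOn_insert_isolated perfOn_empty (v := v) (by simp) s ?_ hn
    intro x hx
    by_contra hxv
    have : x ∈ s \ {v} := ⟨hx, fun h => hxv (Or.inl h)⟩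
    simp [he] at this
  obtain ⟨I, hI, hst, hlt⟩ := h (s \ {v}) hsA hne
  by_cases hIN : ∃ u ∈ I, G.Adj v u
  · obtain ⟨u, huI, hvu⟩ := hIN
    refine ⟨I, hI.trans Set.sdiff_subset, hst, c_lt ?_⟩
    intro t hts ht
    by_cases hvt : v ∈ t
    · -- such a clique extends by `u`, since `v` is simplicial
      have hut : u ∉ t := fun hut => (hts hut).2 huI
      have hcl : G.IsClique (↑(insert u t) : Set V) := by
        rw [Finset.coe_insert, SimpleGraph.isClique_insert]
        refine ⟨ht, fun b hb hub => ?_⟩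
        by_cases hbv : b = v
        · rw [hbv]; exact hvu.symm
        · exact hv u (hsA (hI huI)) b (hsA ⟨(hts hb).1, hbv⟩) hvu
            (ht hvt hb (Ne.symm hbv)) hub
      have hle := c_le (s := s) (t := insert u t) (by
        intro x hx
        rw [Finset.coe_insert] at hx
        rcases hx with rfl | hx
        · exact (hI huI).1
        · exact (hts hx).1) hcl
      rw [Finset.card_insert_of_notMem hut] at hle
      omega
    · refine lt_of_le_of_lt (c_le (s := (s \ {v}) \ I) ?_ ht)
        (hlt.trans_le (c_mono Set.sdiff_subset))
      intro x hx
      exact ⟨⟨(hts hx).1, fun h => hvt (by rw [← (h : x = v)]; exact hx)⟩, (hts hx).2⟩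
  · push Not at hIN
    refine ⟨insert v I, Set.insert_subset hvs (hI.trans Set.sdiff_subset), ?_, ?_⟩
    · rintro a (rfl | ha) b (rfl | hb) hab
      · exact G.loopless.irrefl _ hab
      · exact hIN b hb hab
      · exact hIN a ha hab.symm
      · exact hst a ha b hb hab
    · refine lt_of_le_of_lt (c_mono ?_) (hlt.trans_le (c_mono Set.sdiff_subset))
      rintro x ⟨hx, hx'⟩
      exact ⟨⟨hx, fun h => hx' (Or.inl h)⟩, fun h => hx' (Or.inr h)⟩

omit [Finite V] in
lemma card_le_one_of_stable {S : Set V} (hS : ∀ a ∈ S, ∀ b ∈ S, ¬ G.Adj a b) {t : Finset V}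
    (hts : (t : Set V) ⊆ S) (ht : G.IsClique (t : Set V)) : t.card ≤ 1 := by
  rw [Finset.card_le_one]
  intro a ha b hb
  by_contra hne
  exact hS a (hts ha) b (hts hb) (ht ha hb hne)

lemma perfOn_bipartite {A S : Set V} (h1 : ∀ a ∈ A ∩ S, ∀ b ∈ A ∩ S, ¬ G.Adj a b)
    (h2 : ∀ a ∈ A \ S, ∀ b ∈ A \ S, ¬ G.Adj a b) : PerfOn G A := by
  classical
  intro s hs hn
  by_cases hst : ∀ a ∈ s, ∀ b ∈ s, ¬ G.Adj a b
  · refine ⟨s, subset_rfl, hst, ?_⟩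
    have h0 : cliqueNumOn G (s \ s) < 1 := by
      apply c_lt
      intro t ht _
      have : t = ∅ := by simpa using ht
      simp [this]
    have := c_pos (G := G) hn
    omega
  · push Not at hst
    obtain ⟨a, ha, b, hb, hab⟩ := hst
    refine ⟨s ∩ S, Set.inter_subset_left,
      fun a ha b hb => h1 a ⟨hs ha.1, ha.2⟩ b ⟨hs hb.1, hb.2⟩, ?_⟩
    have h2le := c_le (G := G) (s := s) (t := {a, b})
      (by intro x hx; simp at hx; rcases hx with rfl | rfl <;> assumption)
      (by simpa [SimpleGraph.isClique_insert] using fun _ => hab)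
    rw [Finset.card_pair hab.ne] at h2le
    have : cliqueNumOn G (s \ (s ∩ S)) < 2 := by
      apply c_lt
      intro t hts ht
      have := card_le_one_of_stable (S := A \ S) h2
        (fun x hx => ⟨hs (hts hx).1, fun h => (hts hx).2 ⟨(hts hx).1, h⟩⟩) ht
      omega
    omega

/-- **Lovász's substitution lemma**: if `X` is homogeneous in `A`, `G[X]` is perfect, and so is
`G[A]` with `X` shrunk to any one of its vertices, then `G[A]` is perfect. -/
lemma perfOn_subst {A X : Set V} (hXA : X ⊆ A) (hXne : X.Nonempty)
    (hom : ∀ v ∈ A \ X, ∀ x ∈ X, ∀ y ∈ X, G.Adj v x → G.Adj v y)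
    (hX : PerfOn G X) (hA : ∀ x ∈ X, PerfOn G (insert x (A \ X))) : PerfOn G A := by
  classical
  induction hn : A.ncard using Nat.strong_induction_on generalizing A X with
  | _ n ih =>
  -- the statement for every proper subset of `A`
  have hsub : ∀ s ⊆ A, s ≠ A → PerfOn G s := by
    intro s hs hsA
    rcases (X ∩ s).eq_empty_or_nonempty with he | hne
    · obtain ⟨x, hx⟩ := hXne
      refine (hA x hx).mono fun y hy => Or.inr ⟨hs hy, fun hyX => ?_⟩
      have : y ∈ X ∩ s := ⟨hyX, hy⟩
      simp [he] at this
    · refine ih s.ncard ?_ (X := X ∩ s) Set.inter_subset_right hne ?_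
        (hX.mono Set.inter_subset_left) ?_ rfl
      · rw [← hn]
        exact Set.ncard_lt_ncard (hs.ssubset_of_ne hsA) (Set.toFinite _)
      · intro v hv x hx y hy
        exact hom v ⟨hs hv.1, fun h => hv.2 ⟨h, hv.1⟩⟩ x hx.1 y hy.1
      · intro x hx
        refine (hA x hx.1).mono (Set.insert_subset_insert ?_)
        intro y hy
        exact ⟨hs hy.1, fun h => hy.2 ⟨h, hy.1⟩⟩
  intro s hs hsne
  by_cases hsA : s = A
  swap
  · exact hsub s hs hsA s subset_rfl hsne
  subst hsA
  obtain ⟨IY, hIY, hIYst, hIYlt⟩ := hX X subset_rfl hXne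
  have hIYne : IY.Nonempty := by
    by_contra hemp
    rw [Set.not_nonempty_iff_eq_empty] at hemp
    subst hemp
    simp at hIYlt
  -- a stable set anticomplete to `X` that works off `X` is completed by `IY`
  have key : ∀ J0 ⊆ s \ X, (∀ a ∈ J0, ∀ x ∈ X, ¬ G.Adj a x) →
      (∀ a ∈ J0, ∀ b ∈ J0, ¬ G.Adj a b) →
      (∀ t : Finset V, (t : Set V) ⊆ (s \ X) \ J0 → G.IsClique (t : Set V) →
        t.card < cliqueNumOn G s) →
      ∃ I ⊆ s, (∀ a ∈ I, ∀ b ∈ I, ¬ G.Adj a b) ∧ cliqueNumOn G (s \ I) < cliqueNumOn G s := by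
    intro J0 hJ0 hJX hJst hJt
    refine ⟨J0 ∪ IY, Set.union_subset (hJ0.trans Set.sdiff_subset) (hIY.trans hXA), ?_, ?_⟩
    · rintro a (ha | ha) b (hb | hb) hab
      · exact hJst a ha b hb hab
      · exact hJX a ha b (hIY hb) hab
      · exact hJX b hb a (hIY ha) hab.symm
      · exact hIYst a ha b hb hab
    · apply c_lt
      intro t hts ht
      by_cases htX : ∃ x ∈ t, x ∈ X
      · obtain ⟨x, hxt, hxX⟩ := htX
        obtain ⟨m, hm1, hm2, hm3⟩ := c_exists G X
        have hcard : (t.filter (· ∈ X)).card < m.card := by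
          rw [hm3]
          refine lt_of_le_of_lt (c_le (s := X \ IY) ?_ (ht.subset ?_)) hIYlt
          · intro y hy
            simp only [Finset.coe_filter, Set.mem_ofPred_eq] at hy
            exact ⟨hy.2, fun h => (hts hy.1).2 (Or.inr h)⟩
          · intro y hy
            simp only [Finset.coe_filter, Set.mem_ofPred_eq] at hy
            exact hy.1
        have hdisj : Disjoint (t.filter (¬ · ∈ X)) m := by
          rw [Finset.disjoint_left]
          intro y hy hym
          exact (Finset.mem_filter.1 hy).2 (hm1 hym)
        have hadj : ∀ a ∈ t.filter (¬ · ∈ X), ∀ b ∈ m, G.Adj a b := by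
          intro a ha b hb
          obtain ⟨hat, haX⟩ := Finset.mem_filter.1 ha
          exact hom a ⟨(hts hat).1, haX⟩ x hxX b (hm1 hb)
            (ht hat hxt (fun h => haX (h ▸ hxX)))
        have hle := c_le (G := G) (s := s) (t := t.filter (¬ · ∈ X) ∪ m) (by
            intro y hy
            rcases Finset.mem_union.1 hy with hy | hy
            · exact (hts (Finset.mem_filter.1 hy).1).1
            · exact hXA (hm1 hy)) (by
            intro a ha b hb hab
            rcases Finset.mem_union.1 ha with ha | ha <;> rcases Finset.mem_union.1 hb with hb | hb
            · exact ht (Finset.mem_filter.1 ha).1 (Finset.mem_filter.1 hb).1 hab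
            · exact hadj a ha b hb
            · exact (hadj b hb a ha).symm
            · exact hm2 ha hb hab)
        rw [Finset.card_union_of_disjoint hdisj] at hle
        have := Finset.card_filter_add_card_filter_not (s := t) (· ∈ X)
        omega
      · push Not at htX
        exact hJt t (fun y hy => ⟨⟨(hts hy).1, htX y hy⟩, fun h => (hts hy).2 (Or.inl h)⟩) ht
  by_cases hstab : X ⊆ IY
  · obtain ⟨x, hx⟩ := hXne
    obtain ⟨J, hJ, hxJ, hJst, hJlt⟩ := (hA x hx).strong (Set.mem_insert x _)
    refine key (J \ X) ?_ ?_ ?_ ?_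
    · intro y hy
      exact ⟨((hJ hy.1).resolve_left (fun h => hy.2 (h ▸ hx))).1, hy.2⟩
    · intro a ha y hy hay
      have haA : a ∈ s \ X := (hJ ha.1).resolve_left (fun h => ha.2 (h ▸ hx))
      exact hJst a ha.1 x hxJ (hom a haA y hy x hx hay)
    · exact fun a ha b hb => hJst a ha.1 b hb.1
    · intro t hts ht
      refine lt_of_le_of_lt (c_le ?_ ht) (hJlt.trans_le (c_mono ?_))
      · intro y hy
        exact ⟨Or.inr (hts hy).1, fun h => (hts hy).2 ⟨h, (hts hy).1.2⟩⟩
      · exact Set.insert_subset (hXA hx) Set.sdiff_subset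
  · obtain ⟨y, hyX, hyI⟩ := Set.not_subset.1 hstab
    have hp : PerfOn G (s \ IY) := by
      refine hsub _ Set.sdiff_subset fun h => ?_
      obtain ⟨z, hz⟩ := hIYne
      have : z ∈ s \ IY := by rw [h]; exact hXA (hIY hz)
      exact this.2 hz
    obtain ⟨J, hJ, hyJ, hJst, hJlt⟩ := hp.strong (v := y) ⟨hXA hyX, hyI⟩
    refine key (J \ X) (fun z hz => ⟨(hJ hz.1).1, hz.2⟩) ?_ ?_ ?_
    · intro a ha z hz haz
      exact hJst a ha.1 y hyJ (hom a ⟨(hJ ha.1).1, ha.2⟩ z hz y hyX haz)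
    · exact fun a ha b hb => hJst a ha.1 b hb.1
    · intro t hts ht
      refine lt_of_le_of_lt (c_le ?_ ht) (hJlt.trans_le (c_mono Set.sdiff_subset))
      intro z hz
      exact ⟨⟨(hts hz).1.1, fun h => (hts hz).1.2 (hIY h)⟩,
        fun h => (hts hz).2 ⟨h, (hts hz).1.2⟩⟩

/-- Vertices `x`, `y` with the same neighbours in `C` are interchangeable for perfection. -/
lemma perfOn_swap {C : Set V} {x y : V} (hx : x ∉ C)
    (hxy : ∀ c ∈ C, G.Adj c x ↔ G.Adj c y) (h : PerfOn G (insert x C)) :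
    PerfOn G (insert y C) := by
  classical
  let g : ↥(insert y C : Set V) → V := fun z => if (z : V) = y then x else z
  have hgC : ∀ z : ↥(insert y C : Set V), (z : V) ≠ y → (z : V) ∈ C :=
    fun z hz => z.2.resolve_left hz
  have ginj : Function.Injective g := by
    intro a b hab
    by_cases ha : (a : V) = y <;> by_cases hb : (b : V) = y <;> simp only [g, ha, hb, if_true,
      if_false] at hab
    · exact Subtype.ext (ha.trans hb.symm)
    · exact absurd (hab ▸ hgC b hb) hx
    · exact absurd (hab ▸ hgC a ha) hx
    · exact Subtype.ext hab
  let e : G.induce (insert y C) ↪g G :=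
    { toFun := g
      inj' := ginj
      map_rel_iff' := by
        intro a b
        change G.Adj (g a) (g b) ↔ G.Adj a b
        by_cases ha : (a : V) = y <;> by_cases hb : (b : V) = y
        · simp [g, ha, hb]
        · have := hxy b (hgC b hb)
          simp only [g, ha, hb, if_true, if_false]
          rw [G.adj_comm x, G.adj_comm y, this]
        · have := hxy a (hgC a ha)
          simp only [g, ha, hb, if_true, if_false, this]
        · simp [g, ha, hb] }
  have h1 : PerfOn (G.induce (insert y C)) Set.univ := by
    rw [← perfOn_image e]
    refine h.mono ?_
    rintro _ ⟨z, -, rfl⟩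
    change g z ∈ _
    by_cases hz : (z : V) = y
    · simp [g, hz]
    · simp only [g, hz, if_false]
      exact Or.inr (hgC z hz)
  rwa [← isPerfect_iff_perfOn_univ, isPerfect_induce_iff] at h1

end perf

/-! ### Prime graphs and the centre–anticentre lemma -/

/-- `G` is prime: no homogeneous set other than the trivial ones (at most one vertex, or all). -/
def Prime {V : Type*} (G : SimpleGraph V) : Prop :=
  ∀ S : Set V, S.Nontrivial → S ≠ Set.univ →
    ∃ w ∉ S, ∃ u ∈ S, ∃ v ∈ S, G.Adj w u ∧ ¬ G.Adj w v

/-- No vertex of `G` is simplicial: every vertex has two distinct nonadjacent neighbours. -/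
def NoSimplicial {V : Type*} (G : SimpleGraph V) : Prop :=
  ∀ v, ∃ a b, G.Adj v a ∧ G.Adj v b ∧ a ≠ b ∧ ¬ G.Adj a b

/-- Edges leave every nonempty proper set of vertices (for finite graphs: connectedness). -/
def Conn {V : Type*} (G : SimpleGraph V) : Prop :=
  ∀ S : Set V, S.Nonempty → S ≠ Set.univ → ∃ u ∈ S, ∃ v ∉ S, G.Adj u v

/-- `G` is bull-free, in terms of a triangle `a b c` and pendant edges `a d`, `b e`. -/
def BullFree {V : Type*} (G : SimpleGraph V) : Prop :=
  ∀ a b c d e, G.Adj a b → G.Adj a c → G.Adj b c → G.Adj a d → G.Adj b e → ¬ G.Adj a e →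
    ¬ G.Adj b d → ¬ G.Adj c d → ¬ G.Adj c e → ¬ G.Adj d e → False

/-- No vertex of `G` lies in a triangle. -/
def TriFree {V : Type*} (G : SimpleGraph V) : Prop :=
  ∀ a b c, G.Adj a b → G.Adj a c → G.Adj b c → False

/-- `c` is a centre of the copy `f` of `Q`: it is complete to it. -/
def Cent {U V : Type*} {Q : SimpleGraph U} {G : SimpleGraph V} (f : Q ↪g G) (c : V) : Prop :=
  ∀ u, G.Adj c (f u)

/-- `b` is an anticentre of the copy `f` of `Q`: it lies outside and is anticomplete to it. -/
def Anti {U V : Type*} {Q : SimpleGraph U} {G : SimpleGraph V} (f : Q ↪g G) (b : V) : Prop :=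
  ∀ u, b ≠ f u ∧ ¬ G.Adj b (f u)

/-- The properties of a graph used by the centre–anticentre lemma; the conjunction is invariant
under complementation. `nosplit` says that the graph is not a split graph. -/
structure Solid {U : Type*} (Q : SimpleGraph U) : Prop where
  prime : Prime Q
  conn : Conn Q
  coconn : Conn Qᶜ
  nosplit : ∀ S : Set U, (∃ a ∈ S, ∃ b ∈ S, Q.Adj a b) ∨
    (∃ a ∉ S, ∃ b ∉ S, a ≠ b ∧ ¬ Q.Adj a b)

section struct
variable {U V : Type*} {Q : SimpleGraph U} {G : SimpleGraph V}

lemma Prime.compl (h : Prime G) : Prime Gᶜ := by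
  intro S hS hS'
  obtain ⟨w, hw, u, hu, v, hv, h1, h2⟩ := h S hS hS'
  refine ⟨w, hw, v, hv, u, hu, ?_, ?_⟩
  · rw [SimpleGraph.compl_adj]
    exact ⟨fun h => hw (h ▸ hv), h2⟩
  · rw [SimpleGraph.compl_adj]
    exact fun h => h.2 h1

lemma Solid.compl (h : Solid Q) : Solid Qᶜ where
  prime := h.prime.compl
  conn := h.coconn
  coconn := by rw [compl_compl]; exact h.conn
  nosplit := by
    intro S
    rcases h.nosplit Sᶜ with ⟨a, ha, b, hb, hab⟩ | ⟨a, ha, b, hb, hne, hab⟩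
    · exact Or.inr ⟨a, ha, b, hb, hab.ne, by rw [SimpleGraph.compl_adj]; exact fun h => h.2 hab⟩
    · exact Or.inl ⟨a, not_not.1 ha, b, not_not.1 hb, by
        rw [SimpleGraph.compl_adj]; exact ⟨hne, hab⟩⟩

/-- The bull is self-complementary. -/
lemma BullFree.compl (h : BullFree G) : BullFree Gᶜ := by
  intro a b c d e hab hac hbc had hbe hae hbd hcd hce hde
  simp only [SimpleGraph.compl_adj, not_and_or, not_not] at *
  have nae : a ≠ e := by rintro rfl; grind [G.adj_comm]
  have nbd : b ≠ d := by rintro rfl; grind [G.adj_comm]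
  have ncd : c ≠ d := by rintro rfl; grind [G.adj_comm]
  have nce : c ≠ e := by rintro rfl; grind [G.adj_comm]
  have nde : d ≠ e := by rintro rfl; grind [G.adj_comm]
  refine h d e c b a ?_ ?_ ?_ ?_ ?_ ?_ ?_ ?_ ?_ ?_ <;> grind [G.adj_comm]

lemma Prime.conn (h : Prime G) (hs : NoSimplicial G) : Conn G := by
  intro S hS hS'
  by_cases hn : S.Nontrivial
  · obtain ⟨w, hw, u, hu, v, hv, h1, h2⟩ := h S hn hS'
    exact ⟨u, hu, w, hw, h1.symm⟩
  · obtain ⟨s, hs'⟩ := hS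
    obtain ⟨a, b, ha, -⟩ := hs s
    exact ⟨s, hs', a, fun h => hn ⟨s, hs', a, h, ha.ne⟩, ha⟩

lemma Prime.coconn (h : Prime G) (hs : NoSimplicial G) : Conn Gᶜ := by
  intro S hS hS'
  by_cases hn : S.Nontrivial
  · obtain ⟨w, hw, u, hu, v, hv, h1, h2⟩ := h S hn hS'
    exact ⟨v, hv, w, hw, by
      rw [SimpleGraph.compl_adj]; exact ⟨fun h => hw (h ▸ hv), fun h => h2 h.symm⟩⟩
  · obtain ⟨s, hs'⟩ := hS
    -- a universal vertex `s` would make its complement homogeneous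
    by_contra hcon
    push Not at hcon
    have huniv : ∀ v, v ≠ s → G.Adj s v := by
      intro v hv
      have := hcon s hs' v (fun h => hn ⟨s, hs', v, h, hv.symm⟩)
      rw [SimpleGraph.compl_adj] at this
      by_contra h'
      exact this ⟨hv.symm, h'⟩
    obtain ⟨a, b, ha, hb, hab, -⟩ := hs s
    obtain ⟨w, hw, u, hu, v, hv, h1, h2⟩ := h {s}ᶜ ⟨a, ha.ne', b, hb.ne', hab⟩ (by
      intro h
      have : s ∈ ({s}ᶜ : Set V) := by rw [h]; trivial
      exact this rfl)
    have hws : w = s := by simpa using hw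
    exact h2 (hws ▸ huniv v hv)

lemma Prime.solid (h : Prime Q) (hs : NoSimplicial Q) (hne : Nonempty U) : Solid Q where
  prime := h
  conn := h.conn hs
  coconn := h.coconn hs
  nosplit := by
    intro S
    by_contra hcon
    push Not at hcon
    obtain ⟨h1, h2⟩ := hcon
    -- a vertex of the stable side of a split graph is simplicial
    rcases S.eq_empty_or_nonempty with rfl | ⟨s, hS⟩
    · obtain ⟨v⟩ := hne
      obtain ⟨a, b, -, -, hab, hab'⟩ := hs v
      exact hab' (h2 a (by simp) b (by simp) hab)
    · obtain ⟨a, b, ha, hb, hab, hab'⟩ := hs s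
      exact hab' (h2 a (fun h => h1 s hS a h ha) b (fun h => h1 s hS b h hb) hab)

/-- In a prime graph, any proper set of vertices containing an edge contains an edge that is
mixed to some vertex outside the set. -/
lemma Prime.edge (h : Prime G) {T : Set V} (hT : T ≠ Set.univ) {a b : V} (ha : a ∈ T) (hb : b ∈ T)
    (hab : G.Adj a b) : ∃ u ∈ T, ∃ v ∈ T, ∃ w ∉ T, G.Adj u v ∧ G.Adj w u ∧ ¬ G.Adj w v := by
  by_contra hcon
  push Not at hcon
  -- the component `K` of `G[T]` containing the given edge would be homogeneous
  let K : Set V := {u | Relation.ReflTransGen (fun x y => G.Adj x y ∧ y ∈ T) a u}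
  have hKT : K ⊆ T := by
    intro u hu
    change Relation.ReflTransGen _ a u at hu
    induction hu with
    | refl => exact ha
    | tail _ h2 _ => exact h2.2
  have haK : a ∈ K := Relation.ReflTransGen.refl
  have hbK : b ∈ K := Relation.ReflTransGen.single ⟨hab, hb⟩
  have hconst : ∀ w ∉ T, ∀ u ∈ K, (G.Adj w u ↔ G.Adj w a) := by
    intro w hw u hu
    change Relation.ReflTransGen _ a u at hu
    induction hu with
    | refl => rfl
    | @tail y z h1 h2 ih =>
      rw [← ih]
      exact ⟨hcon z h2.2 y (hKT h1) w hw h2.1.symm, hcon y (hKT h1) z h2.2 w hw h2.1⟩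
  obtain ⟨w, hw, u, hu, v, hv, h1, h2⟩ := h K ⟨a, haK, b, hbK, hab.ne⟩ (by
    intro h
    exact hT (Set.eq_univ_of_univ_subset (h ▸ hKT)))
  by_cases hwT : w ∈ T
  · exact hw (Relation.ReflTransGen.tail hu ⟨h1.symm, hwT⟩)
  · exact h2 ((hconst w hwT v hv).2 ((hconst w hwT u hu).1 h1))

/-- A vertex with an anticentre as neighbour that is not a centre sees a stable set of the
copy. -/
lemma stab_of_not_cent (hB : BullFree G) (hQ : Prime Q) (f : Q ↪g G) {t x : V}
    (ht : Anti f t) (hx : G.Adj x t) (hxc : ¬ Cent f x) {u v : U} (hu : G.Adj x (f u))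
    (hv : G.Adj x (f v)) : ¬ Q.Adj u v := by
  intro huv
  obtain ⟨u, hu, v, hv, w, hw, h1, h2, h3⟩ := hQ.edge (T := {u | G.Adj x (f u)})
    (fun h => hxc fun u => by
      have : u ∈ {u | G.Adj x (f u)} := by rw [h]; trivial
      exact this) hu hv huv
  have e := fun a b => f.map_adj_iff (v := a) (w := b)
  refine hB x (f u) (f v) t (f w) hu hv ((e _ _).2 h1) hx ((e _ _).2 h2.symm) hw
    (fun h => (ht u).2 h.symm) (fun h => (ht v).2 h.symm) (fun h => h3 ((e _ _).1 h.symm)) (ht w).2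

/-- The embedding of complements. -/
def cembed (f : Q ↪g G) : Qᶜ ↪g Gᶜ where
  toFun := f
  inj' := f.injective
  map_rel_iff' := by
    intro a b
    change Gᶜ.Adj (f a) (f b) ↔ Qᶜ.Adj a b
    simp [SimpleGraph.compl_adj, f.map_adj_iff, f.injective.eq_iff]

lemma cent_compl (f : Q ↪g G) (c : V) : Cent (cembed f) c ↔ Anti f c := by
  change (∀ u, Gᶜ.Adj c (f u)) ↔ _
  simp [Anti, SimpleGraph.compl_adj]

lemma anti_compl (f : Q ↪g G) (c : V) : Anti (cembed f) c ↔ Cent f c := by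
  change (∀ u, c ≠ f u ∧ ¬ Gᶜ.Adj c (f u)) ↔ _
  simp only [SimpleGraph.compl_adj, Cent, not_and, not_not]
  exact forall_congr' fun u => ⟨fun h => h.2 h.1, fun h => ⟨h.ne, fun _ => h⟩⟩

/-- The homogeneous set of the centre–anticentre lemma: the closure of the copy of `Q` and of the
vertices mixed on it under adding centres of the copy that have no anticentre as neighbour and
miss some vertex of the set. -/
inductive Hull (f : Q ↪g G) : V → Prop
  | base (v : V) (hc : ¬ Cent f v) (ha : ¬ Anti f v) : Hull f v
  | step (z y : V) (hz : Hull f z) (hy : Cent f y) (hya : ∀ b, Anti f b → ¬ G.Adj y b)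
      (hyz : ¬ G.Adj y z) : Hull f y

/-- The centre–anticentre lemma when every anticentre misses some centre: the `Hull` of the copy is
homogeneous and does not contain the anticentres. -/
lemma center_caseI (hB : BullFree G) (hG : Prime G) (hQ : Solid Q) (f : Q ↪g G)
    (hex : ∃ b, Anti f b) (hall : ∀ b, Anti f b → ∃ c, Cent f c ∧ ¬ G.Adj c b) : False := by
  have e := fun a b => f.map_adj_iff (v := a) (w := b)
  obtain ⟨b₀, hb₀⟩ := hex
  obtain ⟨p, p', hpp⟩ : ∃ p p', Q.Adj p p' := by
    rcases hQ.nosplit Set.univ with ⟨a, -, b, -, hab⟩ | ⟨a, ha, -⟩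
    · exact ⟨a, b, hab⟩
    · exact absurd trivial ha
  have fnotC : ∀ u, ¬ Cent f (f u) := fun u h => G.loopless.irrefl _ (h u)
  have fnotA : ∀ u, ¬ Anti f (f u) := fun u h => (h u).1 rfl
  have hsplit : ∀ u v, Q.Adj u v → ∀ x, (∃ b, Anti f b ∧ G.Adj x b) → ¬ Cent f x →
      G.Adj x (f u) → ¬ G.Adj x (f v) := by
    rintro u v huv x ⟨b, hb, hxb⟩ hx h1 h2
    exact stab_of_not_cent hB hQ.prime f hb hxb hx h1 h2 huv
  have hsplit' : ∀ u v, u ≠ v → ¬ Q.Adj u v → ∀ x, (∀ u, x ≠ f u) →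
      (∃ c, Cent f c ∧ x ≠ c ∧ ¬ G.Adj x c) → ¬ Anti f x →
      ¬ G.Adj x (f u) → G.Adj x (f v) := by
    rintro u v hne huv x hxf ⟨c, hc, hxc, hxc'⟩ hx h1
    by_contra h2
    refine stab_of_not_cent hB.compl hQ.compl.prime (cembed f) ((anti_compl f c).2 hc)
      (x := x) ?_ (fun h => hx ((cent_compl f x).1 h)) (u := u) (v := v) ?_ ?_ ?_
    · rw [SimpleGraph.compl_adj]; exact ⟨hxc, hxc'⟩
    · change Gᶜ.Adj x (f u); rw [SimpleGraph.compl_adj]; exact ⟨hxf u, h1⟩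
    · change Gᶜ.Adj x (f v); rw [SimpleGraph.compl_adj]; exact ⟨hxf v, h2⟩
    · rw [SimpleGraph.compl_adj]; exact ⟨hne, huv⟩
  -- the outside vertices mixed on the copy
  have hmix : ∀ r, (∀ u, r ≠ f u) → ¬ Cent f r → ¬ Anti f r →
      (∃ u, G.Adj r (f u)) ∧ ∃ u, ¬ G.Adj r (f u) := by
    intro r hr h1 h2
    constructor
    · by_contra h; push Not at h; exact h2 fun u => ⟨hr u, h u⟩
    · by_contra h; push Not at h; exact h1 h
  -- mixed vertices are anticomplete to the anticentres
  have hRB : ∀ r, ¬ Cent f r → ¬ Anti f r → ∀ b, Anti f b → ¬ G.Adj r b := by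
    intro r h1 h2 b hb hrb
    by_cases hr : ∃ u, r = f u
    · obtain ⟨u, rfl⟩ := hr
      exact (hb u).2 hrb.symm
    push Not at hr
    obtain ⟨c, hc, hcb⟩ := hall b hb
    obtain ⟨⟨u, hu⟩, ⟨u', hu'⟩⟩ := hmix r hr h1 h2
    have hrc : r ≠ c := fun h => h1 (h ▸ hc)
    by_cases hrc' : G.Adj r c
    · -- anti-connectedness of `Q` provides a nonadjacent pair split by `r`
      obtain ⟨x, hx, y, hy, hxy⟩ := hQ.coconn {u | G.Adj r (f u)} ⟨u, hu⟩ (fun h => hu' (by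
        have : u' ∈ {u | G.Adj r (f u)} := by rw [h]; trivial
        exact this))
      rw [SimpleGraph.compl_adj] at hxy
      exact hB c r (f x) (f y) b hrc'.symm (hc x) hx (hc y) hrb hcb hy
        (fun h => hxy.2 ((e _ _).1 h)) (fun h => (hb x).2 h.symm) (fun h => (hb y).2 h.symm)
    · rcases hQ.nosplit {u | G.Adj r (f u)} with ⟨x, hx, y, hy, hxy⟩ | ⟨x, hx, y, hy, hne, hxy⟩
      · exact hsplit x y hxy r ⟨b, hb, hrb⟩ h1 hx hy
      · exact hy (hsplit' x y hne hxy r hr ⟨c, hc, hrc, hrc'⟩ h2 hx)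
  -- mixed vertices are complete to the centres that see an anticentre
  have hRA : ∀ r, ¬ Cent f r → ¬ Anti f r → ∀ c, Cent f c → (∃ b, Anti f b ∧ G.Adj c b) →
      G.Adj c r := by
    rintro r h1 h2 c hc ⟨b, hb, hcb⟩
    by_cases hr : ∃ u, r = f u
    · obtain ⟨u, rfl⟩ := hr
      exact hc u
    push Not at hr
    by_contra hcr
    obtain ⟨⟨u, hu⟩, ⟨u', hu'⟩⟩ := hmix r hr h1 h2
    obtain ⟨x, hx, y, hy, hxy⟩ := hQ.conn {u | G.Adj r (f u)} ⟨u, hu⟩ (fun h => hu' (by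
        have : u' ∈ {u | G.Adj r (f u)} := by rw [h]; trivial
        exact this))
    exact hB c (f x) (f y) b r (hc x) (hc y) ((e _ _).2 hxy) hcb (SimpleGraph.Adj.symm hx) hcr
      (fun h => (hb x).2 h.symm) (fun h => (hb y).2 h.symm) (fun h => hy h.symm)
      (fun h => hRB r h1 h2 b hb h.symm)
  -- members of the hull miss all anticentres and have a neighbour in the copy
  have hHB : ∀ v, Hull f v → ∀ b, Anti f b → ¬ G.Adj v b := by
    intro v hv
    cases hv with
    | base _ hc ha => exact hRB v hc ha
    | step z _ hz hy hya hyz => exact hya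
  have hHf : ∀ v, Hull f v → ∃ u, G.Adj v (f u) := by
    intro v hv
    cases hv with
    | base _ hc ha =>
      by_cases hr : ∃ u, v = f u
      · obtain ⟨u, rfl⟩ := hr
        obtain ⟨x, hx, y, hy, hxy⟩ := hQ.conn {u} ⟨u, rfl⟩ (fun h => hpp.ne (by
          have h1 : p ∈ ({u} : Set U) := by rw [h]; trivial
          have h2 : p' ∈ ({u} : Set U) := by rw [h]; trivial
          exact h1.trans h2.symm))
        have hxu : x = u := hx
        exact ⟨y, (e _ _).2 (hxu ▸ hxy)⟩
      · push Not at hr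
        exact (hmix v hr hc ha).1
    | step z _ hz hy hya hyz => exact ⟨p, hy p⟩
  have hHA : ∀ v, Hull f v → ∀ c, Cent f c → (∃ b, Anti f b ∧ G.Adj c b) → G.Adj c v := by
    intro v hv
    induction hv with
    | base v hc ha => exact hRA v hc ha
    | step z y hz hy hya hyz ih =>
      rintro c hc ⟨b, hb, hcb⟩
      by_contra hcy
      obtain ⟨u, hu⟩ := hHf z hz
      exact hB c (f u) z b y (hc u) (ih c hc ⟨b, hb, hcb⟩) hu.symm hcb (hy u).symm hcy
        (fun h => (hb u).2 h.symm) (hHB z hz b hb) (fun h => hyz h.symm)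
        (fun h => hya b hb h.symm)
  obtain ⟨w, hw, x, hx, y, hy, hwx, hwy⟩ := hG {v | Hull f v}
    ⟨f p, .base _ (fnotC p) (fnotA p), f p', .base _ (fnotC p') (fnotA p'),
      fun h => hpp.ne (f.injective h)⟩ (by
      intro h
      have hb : Hull f b₀ := by
        have : b₀ ∈ {v | Hull f v} := by rw [h]; trivial
        exact this
      obtain ⟨u, hu⟩ := hHf b₀ hb
      exact (hb₀ u).2 hu)
  by_cases hwA : Anti f w
  · exact hHB x hx w hwA hwx.symm
  by_cases hwC : Cent f w
  · by_cases hwB : ∃ b, Anti f b ∧ G.Adj w b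
    · exact hwy (hHA y hy w hwC hwB)
    · push Not at hwB
      exact hw (Hull.step y w hy hwC hwB hwy)
  · exact hw (Hull.base w hwC hwA)

/-- **Centre–anticentre lemma.** In a prime bull-free graph, no copy of a solid graph has both a
centre and an anticentre. If some anticentre sees all centres, pass to the complement. -/
lemma no_center (hB : BullFree G) (hG : Prime G) (hQ : Solid Q) (f : Q ↪g G)
    {b : V} (hb : Anti f b) (c : V) : ¬ Cent f c := by
  intro hc
  by_cases hall : ∀ b, Anti f b → ∃ c, Cent f c ∧ ¬ G.Adj c b
  · exact center_caseI hB hG hQ f ⟨b, hb⟩ hall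
  · push Not at hall
    obtain ⟨b', hb', hall⟩ := hall
    refine center_caseI hB.compl hG.compl hQ.compl (cembed f) ⟨c, (anti_compl f c).2 hc⟩ ?_
    intro c' hc'
    refine ⟨b', (cent_compl f b').2 hb', ?_⟩
    rw [SimpleGraph.compl_adj]
    exact fun h => h.2 (hall c' ((anti_compl f c').1 hc')).symm

/-- A vertex with an anticentre as neighbour sees a stable set of the copy. -/
lemma stab (hB : BullFree G) (hG : Prime G) (hQ : Solid Q) (f : Q ↪g G) {t x : V}
    (ht : Anti f t) (hx : G.Adj x t) {u v : U} (hu : G.Adj x (f u))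
    (hv : G.Adj x (f v)) : ¬ Q.Adj u v :=
  stab_of_not_cent hB hQ.prime f ht hx (no_center hB hG hQ f ht x) hu hv

end struct

/-- A graph sharing the features of minimal imperfect graphs that matter here: prime, without
simplicial vertices, and not bipartite. -/
structure Core {U : Type*} (Q : SimpleGraph U) : Prop where
  prime : Prime Q
  noSimplicial : NoSimplicial Q
  nonbip : ∀ S : Set U, (∃ a ∈ S, ∃ b ∈ S, Q.Adj a b) ∨ (∃ a ∉ S, ∃ b ∉ S, Q.Adj a b)

/-- Hammer-freeness: triangle `a b c` and path `c d e`. -/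
def HammerFree {V : Type*} (G : SimpleGraph V) : Prop :=
  ∀ a b c d e, G.Adj a b → G.Adj a c → G.Adj b c → G.Adj c d → G.Adj d e → ¬ G.Adj a d →
    ¬ G.Adj b d → ¬ G.Adj a e → ¬ G.Adj b e → ¬ G.Adj c e → False

/-- House-freeness: roof `c` on the edge `a b` of the four-cycle `x a b d`. -/
def HouseFree {V : Type*} (G : SimpleGraph V) : Prop :=
  ∀ a b c x d, G.Adj a b → G.Adj a c → G.Adj b c → G.Adj x a → ¬ G.Adj x b → ¬ G.Adj x c →
    G.Adj d b → ¬ G.Adj d a → ¬ G.Adj d c → G.Adj x d → False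

/-- Diamond-freeness: two common neighbours `c`, `d` of adjacent vertices `a`, `b` are
adjacent. -/
def DiamondFree {V : Type*} (G : SimpleGraph V) : Prop :=
  ∀ a b c d, G.Adj a b → G.Adj a c → G.Adj a d → G.Adj b c → G.Adj b d → c ≠ d → G.Adj c d

section cases
variable {U V : Type*} {Q : SimpleGraph U} {G : SimpleGraph V}

lemma Core.nonempty (h : Core Q) : Nonempty U := by
  rcases h.nonbip Set.univ with ⟨a, -⟩ | ⟨a, -⟩ <;> exact ⟨a⟩

lemma Core.solid (h : Core Q) : Solid Q := h.prime.solid h.noSimplicial h.nonempty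

lemma NoSimplicial.other (h : NoSimplicial G) (v r : V) : ∃ q, G.Adj v q ∧ q ≠ r := by
  obtain ⟨a, b, ha, hb, hab, -⟩ := h v
  by_cases har : a = r
  · exact ⟨b, hb, fun h => hab (har.trans h.symm)⟩
  · exact ⟨a, ha, har⟩

lemma exists_adj_of_not_anti (f : Q ↪g G) {x t : V} (ht : Anti f t) (hx : G.Adj x t)
    (hxa : ¬ Anti f x) : ∃ u, G.Adj x (f u) := by
  by_contra h
  push Not at h
  exact hxa fun u => ⟨fun h' => (ht u).2 (h' ▸ hx.symm), h u⟩

/-! ### Hammer-free graphs -/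

/-- If one vertex of a triangle is an anticentre, then so are the others. A counterexample `t x y`
would yield a hammer, whether `x` and `y` see different vertices of the copy or the same. -/
lemma hammer_one (hB : BullFree G) (hG : Prime G) (hH : HammerFree G) (hQ : Core Q) (f : Q ↪g G)
    {t x y : V} (ht : Anti f t) (hxt : G.Adj x t) (hyt : G.Adj y t) (hxy : G.Adj x y)
    (hx : ¬ Anti f x) : False := by
  have e := fun a b => f.map_adj_iff (v := a) (w := b)
  have sx : ∀ {u v}, G.Adj x (f u) → G.Adj x (f v) → ¬ Q.Adj u v :=
    fun h1 h2 => stab hB hG hQ.solid f ht hxt h1 h2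
  have sy : ∀ {u v}, G.Adj y (f u) → G.Adj y (f v) → ¬ Q.Adj u v :=
    fun h1 h2 => stab hB hG hQ.solid f ht hyt h1 h2
  have ha : ∀ {u v}, G.Adj x (f u) → ¬ G.Adj y (f u) → Q.Adj u v → G.Adj y (f v) := by
    intro u v h1 h2 h3
    by_contra h4
    exact hH t y x (f u) (f v) hyt.symm hxt.symm hxy.symm h1 ((e _ _).2 h3) (ht u).2 h2 (ht v).2 h4
      (fun h5 => sx h1 h5 h3)
  have ha' : ∀ {u v}, G.Adj y (f u) → ¬ G.Adj x (f u) → Q.Adj u v → G.Adj x (f v) := by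
    intro u v h1 h2 h3
    by_contra h4
    exact hH t x y (f u) (f v) hxt.symm hyt.symm hxy h1 ((e _ _).2 h3) (ht u).2 h2 (ht v).2 h4
      (fun h5 => sy h1 h5 h3)
  -- if `x` and `y` saw different stable sets, `Q` would be bipartite
  have hmixed : ∀ u, ¬ ((G.Adj x (f u) ∧ ¬ G.Adj y (f u)) ∨ (G.Adj y (f u) ∧ ¬ G.Adj x (f u))) := by
    by_contra hcon
    push Not at hcon
    let S : Set U := {u | (G.Adj x (f u) ∧ ¬ G.Adj y (f u)) ∨ (G.Adj y (f u) ∧ ¬ G.Adj x (f u))}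
    have hSne : S.Nonempty := hcon
    have huniv : S = Set.univ := by
      by_contra hne
      obtain ⟨u, hu, v, hv, huv⟩ := hQ.solid.conn S hSne hne
      rcases hu with ⟨h1, h2⟩ | ⟨h1, h2⟩
      · exact hv (Or.inr ⟨ha h1 h2 huv, fun h => sx h1 h huv⟩)
      · exact hv (Or.inl ⟨ha' h1 h2 huv, fun h => sy h1 h huv⟩)
    rcases hQ.nonbip {u | G.Adj x (f u)} with ⟨u, hu, v, hv, huv⟩ | ⟨u, hu, v, hv, huv⟩
    · exact sx hu hv huv
    · have hu' : u ∈ S := by rw [huniv]; trivial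
      have hv' : v ∈ S := by rw [huniv]; trivial
      exact sy (hu'.resolve_left fun h => hu h.1).1 (hv'.resolve_left fun h => hv h.1).1 huv
  have heq : ∀ u, G.Adj x (f u) ↔ G.Adj y (f u) := by
    intro u
    have := hmixed u
    tauto
  obtain ⟨u₀, hu₀⟩ := exists_adj_of_not_anti f ht hxt hx
  rcases hQ.nonbip {u | G.Adj x (f u)} with ⟨u, hu, v, hv, huv⟩ | ⟨u, hu, v, hv, huv⟩
  · exact sx hu hv huv
  · obtain ⟨p, hp, q, hq, w, hw, h1, h2, h3⟩ := hQ.prime.edge (T := {u | ¬ G.Adj x (f u)})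
      (fun h => by
        have : u₀ ∈ {u | ¬ G.Adj x (f u)} := by rw [h]; trivial
        exact this hu₀) hu hv huv
    have hw' : G.Adj x (f w) := not_not.1 hw
    exact hH x y (f w) (f p) (f q) hxy hw' ((heq w).1 hw') ((e _ _).2 h2) ((e _ _).2 h1) hp
      (fun h => hp ((heq p).2 h)) hq (fun h => hq ((heq q).2 h)) (fun h => h3 ((e _ _).1 h))

/-- No anticentre lies in a triangle: such triangles would consist of anticentres, and a shortest
path from them towards the copy would extend one of them to a hammer. -/
lemma hammer_case (hB : BullFree G) (hG : Prime G) (hS : NoSimplicial G) (hH : HammerFree G)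
    (hQ : Core Q) (f : Q ↪g G) {t x y : V} (ht : Anti f t) (htx : G.Adj t x) (hty : G.Adj t y)
    (hxy : G.Adj x y) : False := by
  have hx : Anti f x := by
    by_contra hx
    exact hammer_one hB hG hH hQ f ht htx.symm hty.symm hxy hx
  have hy : Anti f y := by
    by_contra hy
    exact hammer_one hB hG hH hQ f ht hty.symm htx.symm hxy.symm hy
  -- triangles of anticentres: leave the set of their vertices and neighbours along an edge
  let S : Set V := {s | Anti f s ∧ ∃ a b, Anti f a ∧ Anti f b ∧ G.Adj s a ∧ G.Adj s b ∧ G.Adj a b}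
  obtain ⟨u₀⟩ := hQ.nonempty
  have hone : ∀ p ∉ S, ∀ s a b, Anti f s → Anti f a → Anti f b → G.Adj s a → G.Adj s b →
      G.Adj a b → G.Adj p s → ¬ G.Adj p a := by
    intro p hp s a b hs ha hb hsa hsb hab hps hpa
    by_cases hpA : Anti f p
    · exact hp ⟨hpA, s, a, hs, ha, hps, hpa, hsa⟩
    · exact hammer_one hB hG hH hQ f hs hps hsa.symm hpa hpA
  obtain ⟨d, hd, q, hq, hdq⟩ := hG.conn hS (S ∪ {p | ∃ s ∈ S, G.Adj p s})
    ⟨t, Or.inl ⟨ht, x, y, hx, hy, htx, hty, hxy⟩⟩ (by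
      intro h
      have : f u₀ ∈ S ∪ {p | ∃ s ∈ S, G.Adj p s} := by rw [h]; trivial
      rcases this with h | ⟨s, hs, h⟩
      · exact (h.1 u₀).1 rfl
      · exact (hs.1 u₀).2 h.symm)
  have hdS : d ∉ S := fun h => hq (Or.inr ⟨d, h, hdq.symm⟩)
  obtain ⟨s, ⟨hs, a, b, ha, hb, hsa, hsb, hab⟩, hds⟩ := hd.resolve_left hdS
  refine hH a b s d q hab hsa.symm hsb.symm hds.symm hdq
    (fun h => hone d hdS s a b hs ha hb hsa hsb hab hds h.symm)
    (fun h => hone d hdS s b a hs hb ha hsb hsa hab.symm hds h.symm) ?_ ?_ ?_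
  · exact fun h => hq (Or.inr ⟨a, ⟨ha, s, b, hs, hb, hsa.symm, hab, hsb⟩, h.symm⟩)
  · exact fun h => hq (Or.inr ⟨b, ⟨hb, s, a, hs, ha, hsb.symm, hab.symm, hsa⟩, h.symm⟩)
  · exact fun h => hq (Or.inr ⟨s, ⟨hs, a, b, ha, hb, hsa, hsb, hab⟩, h.symm⟩)

/-! ### Diamond-free graphs -/

/-- `K` is a clique with at least three vertices and no vertex outside `K` has two neighbours
in `K`. In a diamond-free graph these are the maximal cliques of size at least three. -/
structure BigClique (G : SimpleGraph V) (K : Set V) : Prop where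
  clique : ∀ a ∈ K, ∀ b ∈ K, a ≠ b → G.Adj a b
  big : ∃ a ∈ K, ∃ b ∈ K, ∃ c ∈ K, a ≠ b ∧ a ≠ c ∧ b ≠ c
  max : ∀ z, ∀ a ∈ K, ∀ b ∈ K, a ≠ b → G.Adj z a → G.Adj z b → z ∈ K

lemma BigClique.third {K : Set V} (h : BigClique G K) (k k' : V) :
    ∃ l ∈ K, l ≠ k ∧ l ≠ k' := by
  obtain ⟨a, ha, b, hb, c, hc, hab, hac, hbc⟩ := h.big
  grind

lemma bigClique_of_triangle (hD : DiamondFree G) {a b c : V} (hab : G.Adj a b) (hac : G.Adj a c)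
    (hbc : G.Adj b c) : BigClique G ({a, b} ∪ {z | G.Adj z a ∧ G.Adj z b}) := by
  have hcl : ∀ x ∈ ({a, b} ∪ {z | G.Adj z a ∧ G.Adj z b} : Set V),
      ∀ y ∈ ({a, b} ∪ {z | G.Adj z a ∧ G.Adj z b} : Set V), x ≠ y → G.Adj x y := by
    rintro x ((rfl | rfl) | ⟨hx1, hx2⟩) y ((rfl | rfl) | ⟨hy1, hy2⟩) hne
    · exact absurd rfl hne
    · exact hab
    · exact hy1.symm
    · exact hab.symm
    · exact absurd rfl hne
    · exact hy2.symm
    · exact hx1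
    · exact hx2
    · exact hD a b x y hab hx1.symm hy1.symm hx2.symm hy2.symm hne
  refine ⟨hcl, ⟨a, by simp, b, by simp, c, Or.inr ⟨hac.symm, hbc.symm⟩, hab.ne, hac.ne, hbc.ne⟩, ?_⟩
  intro z x hx y hy hne hzx hzy
  have key : ∀ w ∈ ({a, b} ∪ {z | G.Adj z a ∧ G.Adj z b} : Set V), z = w ∨ G.Adj z w := by
    intro w hw
    by_cases hzw : z = w
    · exact Or.inl hzw
    right
    by_cases hwx : w = x
    · rwa [hwx]
    by_cases hwy : w = y
    · rwa [hwy]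
    exact hD x y z w (hcl x hx y hy hne) hzx.symm (hcl x hx w hw (Ne.symm hwx)) hzy.symm
      (hcl y hy w hw (Ne.symm hwy)) hzw
  rcases key a (by simp) with rfl | h1
  · simp
  rcases key b (by simp) with rfl | h2
  · simp
  exact Or.inr ⟨h1, h2⟩

lemma BigClique.ownNbr (hS : NoSimplicial G) {K : Set V} (hK : BigClique G K) (k : V) :
    ∃ u ∉ K, G.Adj u k := by
  obtain ⟨a, b, ha, hb, hab, hab'⟩ := hS k
  by_cases haK : a ∈ K
  · by_cases hbK : b ∈ K
    · exact absurd (hK.clique a haK b hbK hab) hab'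
    · exact ⟨b, hbK, hb.symm⟩
  · exact ⟨a, haK, ha.symm⟩

/-- Outside neighbours of distinct vertices of a big clique are adjacent. -/
lemma BigClique.adj (hB : BullFree G) {K : Set V} (hK : BigClique G K) {k k' u u' : V}
    (hk : k ∈ K) (hk' : k' ∈ K) (hne : k ≠ k') (hu : u ∉ K) (hu' : u' ∉ K) (huk : G.Adj u k)
    (huk' : G.Adj u' k') : G.Adj u u' := by
  by_contra hcon
  obtain ⟨l, hl, hlk, hlk'⟩ := hK.third k k'
  have only : ∀ {u k k'}, u ∉ K → k ∈ K → k' ∈ K → k ≠ k' → G.Adj u k → ¬ G.Adj u k' :=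
    fun hu hk hk' hne h1 h2 => hu (hK.max _ _ hk _ hk' hne h1 h2)
  exact hB k k' l u u' (hK.clique _ hk _ hk' hne) (hK.clique _ hk _ hl hlk.symm)
    (hK.clique _ hk' _ hl hlk'.symm) huk.symm huk'.symm
    (fun h => only hu' hk' hk hne.symm huk' h.symm) (fun h => only hu hk hk' hne huk h.symm)
    (fun h => only hu hk hl hlk.symm huk h.symm)
    (fun h => only hu' hk' hl hlk'.symm huk' h.symm) hcon

lemma BigClique.unique (hB : BullFree G) (hS : NoSimplicial G) (hD : DiamondFree G) {K : Set V}
    (hK : BigClique G K) {k u v : V} (hk : k ∈ K) (hu : u ∉ K) (hv : v ∉ K) (huk : G.Adj u k)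
    (hvk : G.Adj v k) : u = v := by
  by_contra hne
  obtain ⟨k', hk', hkk', -⟩ := hK.third k k
  obtain ⟨l, hl, hlk, hlk'⟩ := hK.third k k'
  obtain ⟨u', hu', huk'⟩ := hK.ownNbr hS k'
  obtain ⟨u'', hu'', hul⟩ := hK.ownNbr hS l
  have a1 := hK.adj hB hk hk' hkk'.symm hu hu' huk huk'
  have a2 := hK.adj hB hk hl hlk.symm hu hu'' huk hul
  have b1 := hK.adj hB hk hk' hkk'.symm hv hu' hvk huk'
  have b2 := hK.adj hB hk hl hlk.symm hv hu'' hvk hul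
  have c1 := hK.adj hB hk' hl hlk'.symm hu' hu'' huk' hul
  have huv := hD u' u'' u v c1 a1.symm b1.symm a2.symm b2.symm hne
  have hku' : k ≠ u' := fun h => hu' (h ▸ hk)
  have := hD u v k u' huv huk a1 hvk b1 hku'
  exact hu' (hK.max _ _ hk _ hk' hkk'.symm this.symm huk')

/-- A triangle forces the whole graph to consist of two cliques joined by a matching, so that
the non-neighbours of a vertex form a clique. -/
lemma diamond_case (hB : BullFree G) (hG : Prime G) (hS : NoSimplicial G) (hD : DiamondFree G)
    (hQ : Core Q) (f : Q ↪g G) {a b c : V} (ha : Anti f a) (hab : G.Adj a b) (hac : G.Adj a c)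
    (hbc : G.Adj b c) : False := by
  have e := fun a b => f.map_adj_iff (v := a) (w := b)
  set K : Set V := {a, b} ∪ {z | G.Adj z a ∧ G.Adj z b} with hKdef
  have hK : BigClique G K := bigClique_of_triangle hD hab hac hbc
  have haK : a ∈ K := by simp [hKdef]
  have only : ∀ {u k k'}, u ∉ K → k ∈ K → k' ∈ K → k ≠ k' → G.Adj u k → ¬ G.Adj u k' :=
    fun hu hk hk' hne h1 h2 => hu (hK.max _ _ hk _ hk' hne h1 h2)
  have huniv : K ∪ {z | ∃ k ∈ K, G.Adj z k} = Set.univ := by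
    by_contra hne
    obtain ⟨u, hu, z, hz, huz⟩ := hG.conn hS _ ⟨a, Or.inl haK⟩ hne
    have huK : u ∉ K := fun h => hz (Or.inr ⟨u, h, huz.symm⟩)
    have hzK : z ∉ K := fun h => hz (Or.inl h)
    have hzk : ∀ k ∈ K, ¬ G.Adj z k := fun k hk h => hz (Or.inr ⟨k, hk, h⟩)
    obtain ⟨k, hk, huk⟩ := hu.resolve_left huK
    obtain ⟨k', hk', hkk', -⟩ := hK.third k k
    obtain ⟨l, hl, hlk, hlk'⟩ := hK.third k k'
    obtain ⟨u', hu', huk'⟩ := hK.ownNbr hS k'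
    obtain ⟨u'', hu'', hul⟩ := hK.ownNbr hS l
    have a1 := hK.adj hB hk hk' hkk'.symm huK hu' huk huk'
    have a2 := hK.adj hB hk hl hlk.symm huK hu'' huk hul
    have c1 := hK.adj hB hk' hl hlk'.symm hu' hu'' huk' hul
    have hzu'ne : z ≠ u' := fun h => hzk k' hk' (h ▸ huk')
    have hzu' : G.Adj z u' := by
      by_contra hcon
      have hzu'' : ¬ G.Adj z u'' := fun h =>
        hcon (hD u u'' z u' a2 huz a1 h.symm c1.symm hzu'ne)
      exact hB u u' u'' z k' a1 a2 c1 huz huk' (only huK hk hk' hkk'.symm huk)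
        (fun h => hcon h.symm) (fun h => hzu'' h.symm) (only hu'' hl hk' hlk' hul)
        (hzk k' hk')
    -- the big clique through `u`, `u'` also contains `z`; apply the same analysis to it
    have hL := bigClique_of_triangle hD a1 huz hzu'.symm
    obtain ⟨y, hy, hyz⟩ := hL.ownNbr hS z
    have hzL : z ∈ ({u, u'} ∪ {z | G.Adj z u ∧ G.Adj z u'} : Set V) := Or.inr ⟨huz.symm, hzu'⟩
    have hkL : k ∉ ({u, u'} ∪ {z | G.Adj z u ∧ G.Adj z u'} : Set V) := by
      rintro ((rfl | rfl) | ⟨-, h⟩)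
      · exact huK hk
      · exact hu' hk
      · exact only hu' hk' hk hkk' huk' h.symm
    have hkL' : k' ∉ ({u, u'} ∪ {z | G.Adj z u ∧ G.Adj z u'} : Set V) := by
      rintro ((rfl | rfl) | ⟨h, -⟩)
      · exact huK hk'
      · exact hu' hk'
      · exact only huK hk hk' hkk'.symm huk h.symm
    have hyk := hL.adj hB hzL (by simp) huz.ne' hy hkL hyz huk.symm
    have hyk' := hL.adj hB hzL (by simp) hzu'ne hy hkL' hyz huk'.symm
    exact hzk y (hK.max _ _ hk _ hk' hkk'.symm hyk hyk') hyz.symm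
  have hfK : ∀ u, f u ∉ K := fun u h => (ha u).2 (hK.clique a haK _ h (ha u).1)
  have hcomplete : ∀ u v, u ≠ v → Q.Adj u v := by
    intro u v hne
    have h1 : f u ∈ K ∪ {z | ∃ k ∈ K, G.Adj z k} := by rw [huniv]; trivial
    have h2 : f v ∈ K ∪ {z | ∃ k ∈ K, G.Adj z k} := by rw [huniv]; trivial
    obtain ⟨k, hk, huk⟩ := h1.resolve_left (hfK u)
    obtain ⟨k', hk', hvk⟩ := h2.resolve_left (hfK v)
    by_cases hkk : k = k'
    · subst hkk
      exact absurd (f.injective (hK.unique hB hS hD hk (hfK u) (hfK v) huk hvk)) hne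
    · exact (e _ _).1 (hK.adj hB hk hk' hkk (hfK u) (hfK v) huk hvk)
  obtain ⟨u⟩ := hQ.nonempty
  obtain ⟨p, q, -, -, hne, hpq⟩ := hQ.noSimplicial u
  exact hpq (hcomplete p q hne)

/-! ### House-free graphs -/

/-- In a triangle of a (bull, house)-free graph at most one vertex has a private neighbour. -/
lemma priv (hB : BullFree G) (hH : HouseFree G) {a b c x d : V} (hab : G.Adj a b) (hac : G.Adj a c)
    (hbc : G.Adj b c) (hxa : G.Adj x a) (hxb : ¬ G.Adj x b) (hxc : ¬ G.Adj x c) (hdb : G.Adj d b)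
    (hda : ¬ G.Adj d a) (hdc : ¬ G.Adj d c) : False := by
  by_cases hxd : G.Adj x d
  · exact hH a b c x d hab hac hbc hxa hxb hxc hdb hda hdc hxd
  · exact hB a b c x d hab hac hbc hxa.symm hdb.symm (fun h => hda h.symm) (fun h => hxb h.symm)
      (fun h => hxc h.symm) (fun h => hdc h.symm) hxd

/-- One vertex in no triangle is enough, since it passes this property on to its neighbours. -/
lemma triFree_of_vertex (hB : BullFree G) (hH : HouseFree G) (hG : Prime G) (hc : Conn G) {a : V}
    (ha : ∀ b c, G.Adj a b → G.Adj a c → ¬ G.Adj b c) : TriFree G := by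
  have huniv : {a : V | ∀ b c, G.Adj a b → G.Adj a c → ¬ G.Adj b c} = Set.univ := by
    by_contra hne
    obtain ⟨a, ha, b, hb, hab⟩ := hc {a : V | ∀ b c, G.Adj a b → G.Adj a c → ¬ G.Adj b c} ⟨a, ha⟩ hne
    change ¬ ∀ _, _ at hb
    push Not at hb
    obtain ⟨c, d, hbc, hbd, hcd⟩ := hb
    have hca : c ≠ a := fun h => ha b d hab (h ▸ hcd) hbd
    have hda : d ≠ a := fun h => ha b c hab (h ▸ hcd.symm) hbc
    obtain ⟨u, hu, v, hv, w, hw, h1, h2, h3⟩ := hG.edge (T := {z | G.Adj b z ∧ z ≠ a})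
      (fun h => by
        have : a ∈ {z | G.Adj b z ∧ z ≠ a} := by rw [h]; trivial
        exact this.2 rfl) ⟨hbc, hca⟩ ⟨hbd, hda⟩ hcd
    have hau : ∀ {z}, G.Adj b z → ¬ G.Adj a z := fun hz h => ha b _ hab h hz
    have hwa : w ≠ a := fun h => hau hu.1 (h ▸ h2)
    have hwb : ¬ G.Adj w b := fun h => hw ⟨h.symm, hwa⟩
    exact priv hB hH hu.1 hv.1 h1 hab (hau hu.1) (hau hv.1) h2 hwb h3
  intro a b c hab hac hbc
  have : a ∈ {a : V | ∀ b c, G.Adj a b → G.Adj a c → ¬ G.Adj b c} := by rw [huniv]; trivial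
  exact this b c hab hac hbc

lemma BullFree.comap (hB : BullFree G) (f : Q ↪g G) : BullFree Q := by
  intro a b c d e
  have h := hB (f a) (f b) (f c) (f d) (f e)
  simpa only [f.map_adj_iff] using h

lemma HouseFree.comap (hB : HouseFree G) (f : Q ↪g G) : HouseFree Q := by
  intro a b c d e
  have h := hB (f a) (f b) (f c) (f d) (f e)
  simpa only [f.map_adj_iff] using h

/-- Take a vertex `x` with an anticentre as neighbour and a neighbour `a` in the copy: `x` is private
to `a` in every triangle of the copy through `a`, so there are none. -/
lemma core_triFree (hB : BullFree G) (hH : HouseFree G) (hG : Prime G) (hS : NoSimplicial G)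
    (hQ : Core Q) (f : Q ↪g G) {t : V} (ht : Anti f t) : TriFree Q := by
  have e := fun a b => f.map_adj_iff (v := a) (w := b)
  obtain ⟨u₀⟩ := hQ.nonempty
  obtain ⟨b, hb, x, hx, hbx⟩ := hG.conn hS {b | Anti f b} ⟨t, ht⟩ (by
    intro h
    have : f u₀ ∈ {b | Anti f b} := by rw [h]; trivial
    exact (this u₀).1 rfl)
  obtain ⟨a, ha⟩ := exists_adj_of_not_anti f hb hbx.symm hx
  have st : ∀ {u}, Q.Adj a u → ¬ G.Adj x (f u) :=
    fun h1 h2 => stab hB hG hQ.solid f hb hbx.symm ha h2 h1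
  refine triFree_of_vertex (hB.comap f) (hH.comap f) hQ.prime hQ.solid.conn (a := a) ?_
  intro p q hp hq hpq
  obtain ⟨u, hu, v, hv, w, hw, h1, h2, h3⟩ := hQ.prime.edge (T := {z | Q.Adj a z})
    (fun h => by
      have : a ∈ {z | Q.Adj a z} := by rw [h]; trivial
      exact Q.loopless.irrefl _ this) hp hq hpq
  exact priv hB hH ((e _ _).2 hu) ((e _ _).2 hv) ((e _ _).2 h1) ha (st hu) (st hv)
    ((e _ _).2 h2) (fun h => hw ((e _ _).1 h).symm) (fun h => h3 ((e _ _).1 h))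

lemma no_twins (hQ : Core Q) {u v : U} (hne : u ≠ v)
    (h : ∀ w, Q.Adj w u ↔ Q.Adj w v) : False := by
  have hmem : ∀ w x, x ∈ ({u, v} : Set U) → (Q.Adj w x ↔ Q.Adj w u) := by
    rintro w x (rfl | rfl)
    · rfl
    · exact (h w).symm
  obtain ⟨w, hw, x, hx, y, hy, h1, h2⟩ := hQ.prime {u, v} ⟨u, by simp, v, by simp, hne⟩ (by
    intro huniv
    obtain ⟨q, hq, hqv⟩ := hQ.noSimplicial.other u v
    have : q ∈ ({u, v} : Set U) := by rw [huniv]; trivial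
    rcases this with rfl | h
    · exact Q.loopless.irrefl _ hq
    · exact hqv h)
  exact h2 ((hmem w y hy).2 ((hmem w x hx).1 h1))

/-- A vertex whose neighbourhood in the copy contains an edge is a clone of a vertex `p` of the
copy, adjacent to it. -/
lemma clone (hB : BullFree G) (hH : HouseFree G) (hG : Prime G)
    (hQ : Core Q) (hT : TriFree Q) (f : Q ↪g G) {t : V} (ht : Anti f t) {v : V} {r s : U}
    (hr : G.Adj v (f r)) (hs : G.Adj v (f s)) (hrs : Q.Adj r s) :
    ∃ p, ∀ u, G.Adj v (f u) ↔ (u = p ∨ Q.Adj p u) := by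
  have e := fun a b => f.map_adj_iff (v := a) (w := b)
  obtain ⟨p1, hp1, p2, hp2, p0, hp0, h12, h01, h02⟩ := hQ.prime.edge (T := {u | G.Adj v (f u)})
    (fun h => no_center hB hG hQ.solid f ht v fun u => by
      have : u ∈ {u | G.Adj v (f u)} := by rw [h]; trivial
      exact this) hr hs hrs
  have h0q : ∀ {q}, Q.Adj p1 q → ¬ Q.Adj p0 q := fun hq h => hT p1 p0 _ h01.symm hq h
  have hvp0 : ¬ G.Adj (f p0) v := fun h => hp0 h.symm
  -- `p0` is private to `p1` in the triangle `v p1 q`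
  have hA : ∀ {q}, Q.Adj p1 q → G.Adj v (f q) → ∀ {g}, Q.Adj q g → G.Adj v (f g) := by
    intro q hq hvq g hg
    by_contra hcon
    exact priv hB hH (a := f p1) (b := f q) (c := v) ((e _ _).2 hq) (SimpleGraph.Adj.symm hp1)
      hvq.symm ((e _ _).2 h01) (fun h => h0q hq ((e _ _).1 h)) hvp0 ((e _ _).2 hg.symm)
      (fun h => hT p1 q g hq ((e _ _).1 h).symm hg) (fun h => hcon h.symm)
  have hC : ∀ {q}, Q.Adj p1 q → G.Adj v (f q) → ∀ {g}, G.Adj v (f g) → Q.Adj p1 g ∨ Q.Adj q g := by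
    intro q hq hvq g hg
    by_contra hcon
    push Not at hcon
    exact priv hB hH (a := f p1) (b := v) (c := f q) (SimpleGraph.Adj.symm hp1) ((e _ _).2 hq) hvq
      ((e _ _).2 h01) hvp0 (fun h => h0q hq ((e _ _).1 h)) hg.symm
      (fun h => hcon.1 ((e _ _).1 h).symm) (fun h => hcon.2 ((e _ _).1 h).symm)
  have hsub : ∀ {q q'}, Q.Adj p1 q → G.Adj v (f q) → Q.Adj p1 q' → G.Adj v (f q') →
      ∀ g, Q.Adj g q → Q.Adj g q' := by
    intro q q' hq hvq hq' hvq' g hg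
    rcases hC hq' hvq' (hA hq hvq hg.symm) with h | h
    · exact absurd hg (fun h' => hT p1 g q h hq h')
    · exact h.symm
  refine ⟨p2, fun u => ⟨fun hu => ?_, ?_⟩⟩
  · rcases hC h12 hp2 hu with h | h
    · left
      by_contra hne
      exact no_twins hQ hne fun w => ⟨hsub h hu h12 hp2 w, hsub h12 hp2 h hu w⟩
    · exact Or.inr h
  · rintro (rfl | h)
    · exact hp2
    · exact hA h12 hp2 h

/-- `z` has the same neighbours as `p` in the rest of the copy. -/
def Pat (f : Q ↪g G) (p : U) (z : V) : Prop := ∀ u, u ≠ p → (G.Adj z (f u) ↔ Q.Adj p u)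

lemma Pat.ne (hQ : Core Q) (f : Q ↪g G) {p : U} {z : V} (h : Pat f p z) {u : U} (hu : u ≠ p) :
    z ≠ f u := by
  rintro rfl
  have hpu : ¬ Q.Adj p u := fun h' => G.loopless.irrefl _ ((h u hu).2 h')
  refine no_twins hQ hu fun w => ?_
  by_cases hw : w = p
  · subst hw
    exact ⟨fun h => absurd h hpu, fun h => absurd h (Q.loopless.irrefl _)⟩
  · have := h w hw
    rw [f.map_adj_iff] at this
    rw [Q.adj_comm w u, Q.adj_comm w p, this]

open Classical in
/-- The copy of `Q` obtained by replacing the image of `p` by a vertex with the same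
neighbours. -/
noncomputable def repl (hQ : Core Q) (f : Q ↪g G) {p : U} {z : V} (h : Pat f p z) : Q ↪g G where
  toFun := Function.update f p z
  inj' := by
    intro a b hab
    by_cases ha : a = p <;> by_cases hb : b = p
    · exact ha.trans hb.symm
    · subst ha
      rw [Function.update_self, Function.update_of_ne hb] at hab
      exact absurd hab (h.ne hQ f hb)
    · subst hb
      rw [Function.update_self, Function.update_of_ne ha] at hab
      exact absurd hab.symm (h.ne hQ f ha)
    · rw [Function.update_of_ne ha, Function.update_of_ne hb] at hab
      exact f.injective hab
  map_rel_iff' := by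
    intro a b
    change G.Adj (Function.update f p z a) (Function.update f p z b) ↔ Q.Adj a b
    by_cases ha : a = p <;> by_cases hb : b = p
    · subst ha; subst hb
      simp
    · subst ha
      rw [Function.update_self, Function.update_of_ne hb]
      exact h b hb
    · subst hb
      rw [Function.update_self, Function.update_of_ne ha, G.adj_comm, h a ha, Q.adj_comm]
    · rw [Function.update_of_ne ha, Function.update_of_ne hb]
      exact f.map_adj_iff

lemma repl_self (hQ : Core Q) (f : Q ↪g G) {p : U} {z : V} (h : Pat f p z) :
    repl hQ f h p = z := by
  classical
  change Function.update f p z p = z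
  simp

lemma repl_ne (hQ : Core Q) (f : Q ↪g G) {p : U} {z : V} (h : Pat f p z) {u : U} (hu : u ≠ p) :
    repl hQ f h u = f u := by
  classical
  change Function.update f p z u = f u
  simp [hu]

/-- The connected class of clones of `p` that contains `f p`. -/
inductive Clones (f : Q ↪g G) (p : U) : V → Prop
  | base : Clones f p (f p)
  | step (z y : V) (hz : Clones f p z) (hzz : G.Adj y z) (hpat : Pat f p y) : Clones f p y

/-- No vertex sees an edge of a copy that has an anticentre: the connected class of clones of a
vertex of the copy is homogeneous, hence trivial. -/
lemma no_clone (hB : BullFree G) (hH : HouseFree G) (hG : Prime G)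
    (hQ : Core Q) (hT : TriFree Q) (f : Q ↪g G) {t : V} (ht : Anti f t) {v : V} {r s : U}
    (hr : G.Adj v (f r)) (hs : G.Adj v (f s)) : ¬ Q.Adj r s := by
  intro hrs
  have e := fun a b => f.map_adj_iff (v := a) (w := b)
  obtain ⟨p, hp⟩ := clone hB hH hG hQ hT f ht hr hs hrs
  obtain ⟨p1, p1', hp1, -⟩ := hQ.noSimplicial p
  have hpat : ∀ z, Clones f p z → Pat f p z := by
    intro z hz
    cases hz with
    | base => exact fun u _ => e _ _
    | step _ _ _ _ h => exact h
  have hantiR : ∀ {z}, (h : Pat f p z) → z ≠ t → ¬ G.Adj t z → Anti (repl hQ f h) t := by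
    intro z h hzt htz u
    by_cases hu : u = p
    · subst hu; rw [repl_self]; exact ⟨hzt.symm, htz⟩
    · rw [repl_ne hQ f h hu]; exact ht u
  have hne_t : ∀ {z}, Pat f p z → z ≠ t := by
    rintro z h rfl
    exact (ht p1).2 ((h p1 hp1.ne').2 hp1)
  have hnt : ∀ z, Clones f p z → ¬ G.Adj t z := by
    intro z hz
    induction hz with
    | base => exact (ht p).2
    | step z z' hz hzz h ih =>
      intro htz'
      have hz' := hpat z hz
      refine stab hB hG hQ.solid (repl hQ f hz') (hantiR hz' (hne_t hz') ih) htz'.symm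
        (u := p) (v := p1) ?_ ?_ hp1
      · rw [repl_self]; exact hzz
      · rw [repl_ne hQ f hz' hp1.ne']; exact (h p1 hp1.ne').2 hp1
  have hanti : ∀ {z}, (hz : Clones f p z) → Anti (repl hQ f (hpat z hz)) t :=
    fun hz => hantiR _ (hne_t (hpat _ hz)) (hnt _ hz)
  have hmix : ∀ d, ¬ Clones f p d → ∀ z z', Clones f p z → Clones f p z' → G.Adj z z' →
      G.Adj d z → G.Adj d z' := by
    intro d hd z z' hz hz' hzz hdz
    by_contra hdz'
    -- the neighbours of `d` in the two copies agree away from `p`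
    have hagree : ∀ {u}, u ≠ p →
        (G.Adj d (repl hQ f (hpat z hz) u) ↔ G.Adj d (repl hQ f (hpat z' hz') u)) := by
      intro u hu
      rw [repl_ne hQ f _ hu, repl_ne hQ f _ hu]
    have hdp : G.Adj d (repl hQ f (hpat z hz) p) := by rw [repl_self]; exact hdz
    have hdp' : ¬ G.Adj d (repl hQ f (hpat z' hz') p) := by rw [repl_self]; exact hdz'
    by_cases hst : ∃ x y, G.Adj d (repl hQ f (hpat z hz) x) ∧ G.Adj d (repl hQ f (hpat z hz) y) ∧
        Q.Adj x y
    · obtain ⟨x, y, hx, hy, hxy⟩ := hst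
      obtain ⟨q, hq⟩ := clone hB hH hG hQ hT _ (hanti hz) hx hy hxy
      have hqp : q ≠ p := by
        rintro rfl
        refine hd (Clones.step z d hz hdz fun u hu => ?_)
        have := hq u
        rw [repl_ne hQ f _ hu] at this
        rw [this]
        exact ⟨fun h => h.resolve_left hu, Or.inr⟩
      have hqp' : Q.Adj q p := ((hq p).1 hdp).resolve_left (Ne.symm hqp)
      obtain ⟨m, hqm, hmp⟩ := hQ.noSimplicial.other q p
      obtain ⟨q', hq'⟩ := clone hB hH hG hQ hT _ (hanti hz') (r := q) (s := m)
        ((hagree hqp).1 ((hq q).2 (Or.inl rfl))) ((hagree hmp).1 ((hq m).2 (Or.inr hqm))) hqm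
      have hp_not : ¬ (p = q' ∨ Q.Adj q' p) := fun h => hdp' ((hq' p).2 h)
      have hq'q : Q.Adj q' q := by
        rcases (hq' q).1 ((hagree hqp).1 ((hq q).2 (Or.inl rfl))) with h | h
        · exact absurd (Or.inr (h ▸ hqp')) hp_not
        · exact h
      obtain ⟨n, hq'n, hnq⟩ := hQ.noSimplicial.other q' q
      have hnp : n ≠ p := fun h => hp_not (Or.inr (h ▸ hq'n))
      rcases (hq n).1 ((hagree hnp).2 ((hq' n).2 (Or.inr hq'n))) with h | h
      · exact hnq h
      · exact hT q' q n hq'q hq'n h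
    · push Not at hst
      have hdp1 : ¬ G.Adj d (f p1) := by
        intro h
        refine hst p p1 hdp ?_ hp1
        rwa [repl_ne hQ f _ hp1.ne']
      obtain ⟨p0, hp10, hp0⟩ := hQ.noSimplicial.other p1 p
      have hpp0 : ¬ Q.Adj p p0 := fun h => hT p p1 p0 hp1 h hp10
      exact priv hB hH (a := z) (b := f p1) (c := z') ((hpat z hz p1 hp1.ne').2 hp1) hzz
        ((hpat z' hz' p1 hp1.ne').2 hp1).symm hdz hdp1 hdz' ((e _ _).2 hp10.symm)
        (fun h => hpp0 ((hpat z hz p0 hp0).1 h.symm))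
        (fun h => hpp0 ((hpat z' hz' p0 hp0).1 h.symm))
  have hconst : ∀ d, ¬ Clones f p d → ∀ z, Clones f p z → (G.Adj d z ↔ G.Adj d (f p)) := by
    intro d hd z hz
    induction hz with
    | base => rfl
    | step z z' hz hzz h ih =>
      rw [← ih]
      have hz' : Clones f p z' := .step z z' hz hzz h
      exact ⟨hmix d hd z' z hz' hz hzz, hmix d hd z z' hz hz' hzz.symm⟩
  have hvp : G.Adj v (f p) := (hp p).2 (Or.inl rfl)
  have hv : Clones f p v := .step (f p) v .base hvp fun u hu =>
    (hp u).trans ⟨fun h => h.resolve_left hu, Or.inr⟩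
  obtain ⟨w, hw, x, hx, y, hy, h1, h2⟩ := hG {z | Clones f p z} ⟨v, hv, f p, Clones.base, hvp.ne⟩
    (fun h => by
      have : t ∈ {z | Clones f p z} := by rw [h]; trivial
      exact hne_t (hpat t this) rfl)
  exact h2 ((hconst w hw y hy).2 ((hconst w hw x hx).1 h1))

/-- The vertices of the copy lie in no triangle, whence `triFree_of_vertex` applies. -/
lemma house_case (hB : BullFree G) (hG : Prime G) (hS : NoSimplicial G) (hH : HouseFree G)
    (hQ : Core Q) (f : Q ↪g G) {t : V} (ht : Anti f t) : TriFree G := by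
  have e := fun a b => f.map_adj_iff (v := a) (w := b)
  have hT := core_triFree hB hH hG hS hQ f ht
  have hno : ∀ {v r s}, G.Adj v (f r) → G.Adj v (f s) → ¬ Q.Adj r s :=
    fun h1 h2 => no_clone hB hH hG hQ hT f ht h1 h2
  obtain ⟨a⟩ := hQ.nonempty
  obtain ⟨p, p', hp, -⟩ := hQ.noSimplicial a
  have hno' : ∀ {v}, G.Adj (f a) v → ¬ G.Adj (f p) v := fun h1 h2 => hno h1.symm h2.symm hp
  refine triFree_of_vertex hB hH hG (hG.conn hS) (a := f a) ?_
  intro b c hb hc hbc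
  have hbp : b ≠ f p := fun h => hno' hc (h ▸ hbc)
  have hcp : c ≠ f p := fun h => hno' hb (h ▸ hbc.symm)
  obtain ⟨u, hu, v, hv, w, hw, h1, h2, h3⟩ := hG.edge (T := {z | G.Adj (f a) z ∧ z ≠ f p})
    (fun h => by
      have : f p ∈ {z | G.Adj (f a) z ∧ z ≠ f p} := by rw [h]; trivial
      exact this.2 rfl) ⟨hb, hbp⟩ ⟨hc, hcp⟩ hbc
  have hwp : w ≠ f p := fun h => hno' hu.1 (h ▸ h2)
  exact priv hB hH hu.1 hv.1 h1 ((e _ _).2 hp.symm) (hno' hu.1) (hno' hv.1) h2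
    (fun h => hw ⟨h.symm, hwp⟩) h3

end cases

/-! ### Weighted division -/

section division
variable {V : Type*} {G : SimpleGraph V}

lemma HammerFree.comap {U : Type*} {Q : SimpleGraph U} (hB : HammerFree G) (f : Q ↪g G) :
    HammerFree Q := by
  intro a b c d e
  have h := hB (f a) (f b) (f c) (f d) (f e)
  simpa only [f.map_adj_iff] using h

lemma DiamondFree.comap {U : Type*} {Q : SimpleGraph U} (hB : DiamondFree G) (f : Q ↪g G) :
    DiamondFree Q := by
  intro a b c d
  have h := hB (f a) (f b) (f c) (f d)
  simpa only [f.map_adj_iff, ne_eq, f.injective.eq_iff] using h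

/-- If every vertex is an anticentre of a copy of some core, the graph is triangle-free. -/
lemma triFree_of_cores (hB : BullFree G) (hE : HouseFree G ∨ HammerFree G ∨ DiamondFree G)
    (hG : Prime G) (hS : NoSimplicial G)
    (hc : ∀ t, ∃ F : Set V, Core (G.induce F) ∧ ∃ f : G.induce F ↪g G, Anti f t) : TriFree G := by
  intro a b c hab hac hbc
  obtain ⟨F, hQ, f, hf⟩ := hc a
  rcases hE with hE | hE | hE
  · exact house_case hB hG hS hE hQ f hf a b c hab hac hbc
  · exact hammer_case hB hG hS hE hQ f hf hab hac hbc
  · exact diamond_case hB hG hS hE hQ f hf hab hac hbc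

/-- An imperfect induced subgraph contains a minimal one, which is a `Core`. -/
lemma exists_core [Finite V] {M : Set V} (hM : ¬ PerfOn G M) :
    ∃ F ⊆ M, Core (G.induce F) := by
  obtain ⟨F, hF⟩ := (Set.toFinite {F : Set V | F ⊆ M ∧ ¬ PerfOn G F}).exists_minimal
    ⟨M, subset_rfl, hM⟩
  have hmin : ∀ F' ⊆ F, F' ≠ F → PerfOn G F' := by
    intro F' h1 h2
    by_contra h3
    exact h2 (h1.antisymm (hF.2 ⟨h1.trans hF.1.1, h3⟩ h1))
  refine ⟨F, hF.1.1, ⟨?_, ?_, ?_⟩⟩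
  · intro S hS hS'
    by_contra hcon
    push Not at hcon
    obtain ⟨x, hx, y, hy, hxy⟩ := hS
    have hXF : Subtype.val '' S ⊆ F := by rintro _ ⟨z, -, rfl⟩; exact z.2
    refine hF.1.2 (perfOn_subst hXF ⟨x, x, hx, rfl⟩ ?_ (hmin _ hXF ?_) ?_)
    · rintro v ⟨hv, hvS⟩ _ ⟨p, hp, rfl⟩ _ ⟨q, hq, rfl⟩ h
      exact hcon ⟨v, hv⟩ (fun h => hvS ⟨_, h, rfl⟩) p hp q hq h
    · intro h
      refine hS' (Set.eq_univ_of_forall fun z => ?_)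
      have : (z : V) ∈ Subtype.val '' S := h.ge z.2
      obtain ⟨z', hz', he⟩ := this
      exact Subtype.ext he ▸ hz'
    · rintro _ ⟨p, hp, rfl⟩
      obtain ⟨q, hq, hqp⟩ : ∃ q ∈ S, q ≠ p := by
        by_cases h : x = p
        · exact ⟨y, hy, fun h' => hxy (h.trans h'.symm)⟩
        · exact ⟨x, hx, h⟩
      refine hmin _ (Set.insert_subset p.2 Set.sdiff_subset) fun h => ?_
      have : (q : V) ∈ insert (p : V) (F \ Subtype.val '' S) := h.ge q.2
      rcases this with h | h
      · exact hqp (Subtype.ext h)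
      · exact h.2 ⟨q, hq, rfl⟩
  · intro v
    by_contra hcon
    push Not at hcon
    refine hF.1.2 ?_
    have := perfOn_insert_simplicial (hmin (F \ {(v : V)}) Set.sdiff_subset (fun h => by
      have : (v : V) ∈ F \ {(v : V)} := h.ge v.2
      exact this.2 rfl)) (v := v) (fun a ha b hb h1 h2 hne =>
        hcon ⟨a, ha.1⟩ ⟨b, hb.1⟩ h1 h2 (fun h => hne (congrArg Subtype.val h)))
    rwa [Set.insert_sdiff_singleton, Set.insert_eq_of_mem v.2] at this
  · intro S
    by_contra hcon
    push Not at hcon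
    refine hF.1.2 (perfOn_bipartite (S := Subtype.val '' S) ?_ ?_)
    · rintro _ ⟨-, a, ha, rfl⟩ _ ⟨-, b, hb, rfl⟩
      exact hcon.1 a ha b hb
    · rintro a ⟨ha, ha'⟩ b ⟨hb, hb'⟩
      exact hcon.2 ⟨a, ha⟩ (fun h => ha' ⟨_, h, rfl⟩) ⟨b, hb⟩ (fun h => hb' ⟨_, h, rfl⟩)

/-- For every positive weight function, `s` can be divided into a perfect part and a part in
which the maximum weight of a clique is smaller. -/
def Div {V : Type*} (G : SimpleGraph V) (s : Set V) : Prop :=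
  ∀ w : V → ℕ, (∀ v, 0 < w v) →
    ∃ P ⊆ s, PerfOn G P ∧ wCliqueNumOn G w (s \ P) < wCliqueNumOn G w s

variable [Finite V]

/-- A vertex together with its non-neighbours can be removed if the latter are perfect. -/
lemma div_of_anti {s : Set V} {v : V} (hv : v ∈ s)
    (h : PerfOn G {u | u ∈ s ∧ u ≠ v ∧ ¬ G.Adj v u}) : Div G s := by
  classical
  intro w hw
  refine ⟨insert v {u | u ∈ s ∧ u ≠ v ∧ ¬ G.Adj v u}, ?_, perfOn_insert_isolated h ?_, ?_⟩
  · exact Set.insert_subset hv fun u hu => hu.1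
  · exact fun a ha => ha.2.2
  · refine w_lt fun t hts ht => ?_
    have hvt : v ∉ t := fun h => (hts h).2 (Or.inl rfl)
    have hadj : ∀ u ∈ t, G.Adj v u := by
      intro u hu
      by_contra h'
      exact (hts hu).2 (Or.inr ⟨(hts hu).1, fun h => hvt (h ▸ hu), h'⟩)
    have := w_le (G := G) (w := w) (s := s) (t := insert v t) (by
      rw [Finset.coe_insert]
      exact Set.insert_subset hv fun u hu => (hts hu).1) (by
      rw [Finset.coe_insert]
      exact ht.insert fun u hu _ => hadj u hu)
    rw [Finset.sum_insert hvt] at this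
    have := hw v
    omega

lemma div_of_simplicial {s : Set V} {v : V} (hv : v ∈ s)
    (hs : ∀ a ∈ s, ∀ b ∈ s, G.Adj v a → G.Adj v b → a ≠ b → G.Adj a b) (h : Div G (s \ {v})) :
    Div G s := by
  intro w hw
  obtain ⟨P, hP, hperf, hlt⟩ := h w hw
  refine ⟨insert v P, Set.insert_subset hv (hP.trans Set.sdiff_subset),
    perfOn_insert_simplicial hperf fun a ha b hb => hs a (hP ha).1 b (hP hb).1, ?_⟩
  refine lt_of_le_of_lt (w_mono w ?_) (hlt.trans_le (w_mono w Set.sdiff_subset))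
  exact fun u hu => ⟨⟨hu.1, fun h => hu.2 (Or.inl h)⟩, fun h => hu.2 (Or.inr h)⟩

/-- Weighted division passes from the parts of a modular decomposition to the whole: shrink the
homogeneous set `X` to `x`, giving `x` the maximum weight of a clique in `X`. -/
lemma div_of_homogeneous {s X : Set V} (hXs : X ⊆ s) {x : V} (hx : x ∈ X)
    (hom : ∀ v ∈ s \ X, ∀ a ∈ X, ∀ b ∈ X, G.Adj v a → G.Adj v b)
    (hX : Div G X) (hs : Div G (insert x (s \ X))) : Div G s := by
  classical
  intro w hw
  obtain ⟨PX, hPX, hperfX, hltX⟩ := hX w hw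
  set m := wCliqueNumOn G w X with hm
  set w' : V → ℕ := Function.update w x m with hw'
  have hmpos : 0 < m := by omega
  have hw'pos : ∀ v, 0 < w' v := by
    intro v
    by_cases h : v = x
    · simp [hw', h, hmpos]
    · simp [hw', h, hw v]
  obtain ⟨P', hP', hperf, hlt⟩ := hs w' hw'pos
  have hsum : ∀ r : Finset V, x ∉ r → ∑ v ∈ r, w' v = ∑ v ∈ r, w v := fun r hr =>
    Finset.sum_congr rfl fun v hv => by simp [hw', show v ≠ x from fun h => hr (h ▸ hv)]
  have hsum' : ∀ r : Finset V, x ∉ r → ∑ v ∈ insert x r, w' v = m + ∑ v ∈ r, w v := fun r hr => by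
    rw [Finset.sum_insert hr, hsum r hr]
    simp [hw']
  -- shrinking `X` does not increase the weight
  have hle : wCliqueNumOn G w' (insert x (s \ X)) ≤ wCliqueNumOn G w s := by
    refine Nat.lt_succ_iff.1 (w_lt fun t hts ht => Nat.lt_succ_iff.2 ?_)
    by_cases hxt : x ∈ t
    swap
    · rw [hsum t hxt]
      exact w_le (fun u hu => (hts hu).elim (fun h => absurd (h ▸ hu) hxt) fun h => h.1) ht
    obtain ⟨q, hq1, hq2, hq3⟩ := w_exists G w X
    have hr : ∀ u ∈ t.erase x, u ∈ s \ X := fun u hu =>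
      (hts (Finset.mem_of_mem_erase hu)).resolve_left (Finset.ne_of_mem_erase hu)
    have hdisj : Disjoint q (t.erase x) := Finset.disjoint_left.2 fun u h1 h2 =>
      (hr u h2).2 (hq1 h1)
    have hcross : ∀ u ∈ t.erase x, ∀ p ∈ q, G.Adj u p := fun u hu p hp =>
      hom u (hr u hu) x hx p (hq1 hp)
        (ht (Finset.mem_of_mem_erase hu) hxt (Finset.ne_of_mem_erase hu))
    have := w_le (G := G) (w := w) (s := s) (t := q ∪ t.erase x) (by
      intro u hu
      rcases Finset.mem_union.1 hu with h | h
      · exact hXs (hq1 h)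
      · exact (hr u h).1) (by
      intro u hu v hv huv
      rcases Finset.mem_union.1 hu with h | h <;> rcases Finset.mem_union.1 hv with h' | h'
      · exact hq2 h h' huv
      · exact (hcross v h' u h).symm
      · exact hcross u h v h'
      · exact ht (Finset.mem_of_mem_erase h) (Finset.mem_of_mem_erase h') huv)
    rw [Finset.sum_union hdisj, hq3] at this
    rw [← Finset.insert_erase hxt, hsum' _ (Finset.notMem_erase x t)]
    exact this
  -- a clique is split into its parts inside and outside `X`
  have key : ∀ P ⊆ s, P \ X = P' \ {x} → (x ∈ P' → P ∩ X = PX) →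
      wCliqueNumOn G w (s \ P) < wCliqueNumOn G w s := by
    intro P hP h1 h2
    have hmem : ∀ u, u ∈ s → u ∉ X → u ∉ P → u ∉ P' := by
      intro u hus huX huP hu'
      have : u ∈ P \ X := h1 ▸ ⟨hu', fun h => huX ((show u = x from h) ▸ hx)⟩
      exact huP this.1
    refine w_lt fun t hts ht => ?_
    set r := t.filter (· ∉ X) with hr
    set q := t.filter (· ∈ X) with hq
    have hxr : x ∉ r := fun h => (Finset.mem_filter.1 h).2 hx
    have hsplit : ∑ v ∈ q, w v + ∑ v ∈ r, w v = ∑ v ∈ t, w v :=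
      Finset.sum_filter_add_sum_filter_not t (· ∈ X) w
    have hrt : ∀ u ∈ r, u ∈ s ∧ u ∉ X ∧ u ∉ P' := fun u hu => by
      have := Finset.mem_filter.1 hu
      exact ⟨(hts this.1).1, this.2, hmem u (hts this.1).1 this.2 (hts this.1).2⟩
    have hrcl : G.IsClique (r : Set V) := ht.subset fun u hu => (Finset.mem_filter.1 hu).1
    have hqcl : G.IsClique (q : Set V) := ht.subset fun u hu => (Finset.mem_filter.1 hu).1
    rcases q.eq_empty_or_nonempty with he | ⟨p, hp⟩
    · have := w_le (G := G) (w := w') (s := insert x (s \ X) \ P') (t := r)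
        (fun u hu => ⟨Or.inr ⟨(hrt u hu).1, (hrt u hu).2.1⟩, (hrt u hu).2.2⟩) hrcl
      rw [hsum r hxr] at this
      rw [he, Finset.sum_empty] at hsplit
      omega
    have hp' := Finset.mem_filter.1 hp
    have hins : G.IsClique ((insert x r : Finset V) : Set V) := by
      rw [Finset.coe_insert]
      refine hrcl.insert fun u hu _ => ?_
      have hu' := Finset.mem_filter.1 hu
      exact (hom u ⟨(hrt u hu).1, (hrt u hu).2.1⟩ p hp'.2 x hx
        (ht hu'.1 hp'.1 fun h => hu'.2 (h ▸ hp'.2))).symm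
    by_cases hxP : x ∈ P'
    · have hA := w_le (G := G) (w := w) (s := X \ PX) (t := q) (fun u hu => by
        have hu' := Finset.mem_filter.1 hu
        refine ⟨hu'.2, fun h => (hts hu'.1).2 ?_⟩
        rw [← h2 hxP] at h
        exact h.1) hqcl
      have hC := w_le (G := G) (w := w') (s := insert x (s \ X)) (t := insert x r) (by
        rw [Finset.coe_insert]
        exact Set.insert_subset_insert fun u hu => ⟨(hrt u hu).1, (hrt u hu).2.1⟩) hins
      rw [hsum' r hxr] at hC
      omega
    · have hA := w_le (G := G) (w := w) (s := X) (t := q)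
        (fun u hu => (Finset.mem_filter.1 hu).2) hqcl
      have hC := w_le (G := G) (w := w') (s := insert x (s \ X) \ P') (t := insert x r) (by
        rw [Finset.coe_insert]
        exact Set.insert_subset ⟨Or.inl rfl, hxP⟩
          fun u hu => ⟨Or.inr ⟨(hrt u hu).1, (hrt u hu).2.1⟩, (hrt u hu).2.2⟩) hins
      rw [hsum' r hxr] at hC
      omega
  have hP'x : ∀ u ∈ P', u ≠ x → u ∈ s \ X := fun u hu hne => (hP' hu).resolve_left hne
  by_cases hxP : x ∈ P'
  swap
  · have hd : P' ⊆ s \ X := fun u hu => hP'x u hu fun h => hxP (h ▸ hu)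
    refine ⟨P', hd.trans Set.sdiff_subset, hperf, key P' (hd.trans Set.sdiff_subset) ?_
      fun h => absurd h hxP⟩
    rw [Set.sdiff_singleton_eq_self hxP]
    exact Set.ext fun u => ⟨fun h => h.1, fun h => ⟨h, (hd h).2⟩⟩
  have hd : P' \ {x} ⊆ s \ X := fun u hu => hP'x u hu.1 hu.2
  have hdiff : (P' \ {x} ∪ PX) \ X = P' \ {x} := by
    ext u
    exact ⟨fun h => h.1.resolve_right fun h' => h.2 (hPX h'), fun h => ⟨Or.inl h, (hd h).2⟩⟩
  have hdiff' : (P' \ {x} ∪ PX) \ PX = P' \ {x} := by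
    ext u
    exact ⟨fun h => h.1.resolve_right h.2, fun h => ⟨Or.inl h, fun h' => (hd h).2 (hPX h')⟩⟩
  have hinter : (P' \ {x} ∪ PX) ∩ X = PX := by
    ext u
    exact ⟨fun h => h.1.resolve_left fun h' => (hd h').2 h.2, fun h => ⟨Or.inr h, hPX h⟩⟩
  have hsub : P' \ {x} ∪ PX ⊆ s := Set.union_subset (hd.trans Set.sdiff_subset) (hPX.trans hXs)
  refine ⟨P' \ {x} ∪ PX, hsub, ?_, key _ hsub hdiff fun _ => hinter⟩
  rcases PX.eq_empty_or_nonempty with he | hne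
  · rw [he, Set.union_empty]
    exact hperf.mono Set.sdiff_subset
  · refine perfOn_subst (Set.subset_union_right) hne ?_ hperfX ?_
    · rw [hdiff']
      exact fun v hv a ha b hb => hom v (hd hv) a (hPX ha) b (hPX hb)
    · intro p hp
      rw [hdiff']
      refine perfOn_swap (x := x) (fun h => h.2 rfl) (fun c hc =>
        ⟨hom c (hd hc) x hx p (hPX hp), hom c (hd hc) p (hPX hp) x hx⟩) ?_
      rwa [Set.insert_sdiff_singleton, Set.insert_eq_of_mem hxP]

/-- For triangle-free graphs without simplicial vertices, a perfect division has a stable second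
part, so its cliques are single vertices, which are lighter than edges. -/
lemma div_of_triFree {s : Set V} (hs : s.Nonempty) (hT : TriFree (G.induce s))
    (hS : NoSimplicial (G.induce s)) (hD : PerfectlyDivisible (G.induce s)) : Div G s := by
  classical
  intro w hw
  obtain ⟨v₀, hv₀⟩ := hs
  obtain ⟨A, B, hAB, -, hA, hlt⟩ := hD Set.univ ⟨⟨v₀, hv₀⟩, trivial⟩
  have hω : cliqueNumOn (G.induce s) Set.univ < 3 := by
    refine c_lt fun t _ ht => ?_
    by_contra hcon
    obtain ⟨a, b, c, ha, hb, hc, hab, hac, hbc⟩ := Finset.two_lt_card_iff.1 (by omega : 2 < t.card)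
    exact hT a b c (ht ha hb hab) (ht ha hc hac) (ht hb hc hbc)
  have hstab : ∀ a ∈ B, ∀ b ∈ B, ¬ (G.induce s).Adj a b := by
    intro a ha b hb hab
    have := c_le (G := G.induce s) (s := B) (t := {a, b}) (by
      intro u hu
      rcases (by simpa using hu : u = a ∨ u = b) with rfl | rfl <;> assumption) (by
      rw [Finset.coe_pair]
      exact SimpleGraph.isClique_pair.2 fun _ => hab)
    rw [Finset.card_pair hab.ne] at this
    omega
  refine ⟨Subtype.val '' A, by rintro _ ⟨z, -, rfl⟩; exact z.2, ?_, ?_⟩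
  · rw [isPerfect_induce_iff] at hA
    exact (perfOn_image (SimpleGraph.Embedding.induce s : G.induce s ↪g G) A).2 hA
  have hmem : ∀ u (hu : u ∈ s \ Subtype.val '' A), (⟨u, hu.1⟩ : s) ∈ B := fun u hu => by
    have : (⟨u, hu.1⟩ : s) ∈ A ∪ B := hAB ▸ trivial
    exact this.resolve_left fun h => hu.2 ⟨_, h, rfl⟩
  refine w_lt fun t hts ht => ?_
  have hcard := card_le_one_of_stable (S := s \ Subtype.val '' A)
    (fun a ha b hb hab => hstab _ (hmem a ha) _ (hmem b hb) hab) hts ht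
  obtain ⟨v, hv, htv⟩ : ∃ v ∈ s, t ⊆ {v} := by
    rcases t.eq_empty_or_nonempty with rfl | ⟨v, hv⟩
    · exact ⟨v₀, hv₀, by simp⟩
    · exact ⟨v, (hts hv).1, fun u hu =>
        Finset.mem_singleton.2 (Finset.card_le_one.1 hcard u hu v hv)⟩
  obtain ⟨u, -, hvu, -⟩ := hS ⟨v, hv⟩
  have hvu' : G.Adj v u := hvu
  have h1 := w_le (G := G) (w := w) (s := s) (t := {v, ↑u}) (by
      intro x hx
      rcases (by simpa using hx : x = v ∨ x = u) with rfl | rfl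
      · exact hv
      · exact u.2) (by
      rw [Finset.coe_pair]
      exact SimpleGraph.isClique_pair.2 fun _ => hvu')
  rw [Finset.sum_pair hvu'.ne] at h1
  have h2 := Finset.sum_le_sum_of_subset (f := w) htv
  rw [Finset.sum_singleton] at h2
  have := hw u
  omega

/-- Every nonempty set of vertices can be divided, by induction on its size: if none of the
reductions applies, the induced subgraph is triangle-free. -/
lemma div_all (hB : BullFree G) (hE : HouseFree G ∨ HammerFree G ∨ DiamondFree G)
    (hD : ∀ s : Set V, TriFree (G.induce s) → PerfectlyDivisible (G.induce s))
    (s : Set V) (hs : s.Nonempty) : Div G s := by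
  induction hn : s.ncard using Nat.strong_induction_on generalizing s with
  | _ n ih =>
  have hsm : ∀ s' ⊆ s, s'.Nonempty → s' ≠ s → Div G s' := fun s' h1 h2 h3 =>
    ih _ (hn ▸ Set.ncard_lt_ncard (h1.ssubset_of_ne h3)) s' h2 rfl
  by_cases hanti : ∃ v ∈ s, PerfOn G {u | u ∈ s ∧ u ≠ v ∧ ¬ G.Adj v u}
  · obtain ⟨v, hv, h⟩ := hanti
    exact div_of_anti hv h
  push Not at hanti
  by_cases hS : NoSimplicial (G.induce s)
  swap
  · unfold NoSimplicial at hS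
    push Not at hS
    obtain ⟨v, hv⟩ := hS
    refine div_of_simplicial v.2 (fun a ha b hb h1 h2 hne =>
      hv ⟨a, ha⟩ ⟨b, hb⟩ h1 h2 fun h => hne (congrArg Subtype.val h)) (hsm _ Set.sdiff_subset ?_ ?_)
    · by_contra he
      rw [Set.not_nonempty_iff_eq_empty] at he
      refine hanti v v.2 (perfOn_empty.mono ?_)
      rw [← he]
      exact fun u hu => ⟨hu.1, hu.2.1⟩
    · intro h
      have : (v : V) ∈ s \ {(v : V)} := h.ge v.2
      exact this.2 rfl
  by_cases hP : Prime (G.induce s)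
  swap
  · unfold Prime at hP
    push Not at hP
    obtain ⟨S, ⟨x, hx, y, hy, hxy⟩, hS', hom⟩ := hP
    have hXs : Subtype.val '' S ⊆ s := by rintro _ ⟨z, -, rfl⟩; exact z.2
    refine div_of_homogeneous hXs ⟨x, hx, rfl⟩ ?_ (hsm _ hXs ⟨x, x, hx, rfl⟩ ?_)
      (hsm _ (Set.insert_subset x.2 Set.sdiff_subset) ⟨x, Or.inl rfl⟩ ?_)
    · rintro v ⟨hv, hvS⟩ _ ⟨p, hp, rfl⟩ _ ⟨q, hq, rfl⟩ h
      exact hom ⟨v, hv⟩ (fun h => hvS ⟨_, h, rfl⟩) p hp q hq h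
    · intro h
      refine hS' (Set.eq_univ_of_forall fun z => ?_)
      have : (z : V) ∈ Subtype.val '' S := h.ge z.2
      obtain ⟨z', hz', he⟩ := this
      exact Subtype.ext he ▸ hz'
    · intro h
      have : (y : V) ∈ insert (x : V) (s \ Subtype.val '' S) := h.ge y.2
      rcases this with h | h
      · exact hxy (Subtype.ext h).symm
      · exact h.2 ⟨y, hy, rfl⟩
  let e : G.induce s ↪g G := SimpleGraph.Embedding.induce s
  have hT : TriFree (G.induce s) := by
    refine triFree_of_cores (hB.comap e)
      (hE.imp (·.comap e) (Or.imp (·.comap e) (·.comap e))) hP hS fun t => ?_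
    have hM : ¬ PerfOn (G.induce s) {u | u ≠ t ∧ ¬ (G.induce s).Adj t u} := by
      rw [← perfOn_image e]
      refine fun h => hanti t t.2 (h.mono ?_)
      rintro u ⟨hu, hut, hadj⟩
      exact ⟨⟨u, hu⟩, ⟨fun h => hut (congrArg Subtype.val h), hadj⟩, rfl⟩
    obtain ⟨F, hF, hc⟩ := exists_core hM
    refine ⟨F, hc, SimpleGraph.Embedding.induce F, fun u => ?_⟩
    exact ⟨fun h => (hF u.2).1 h.symm, (hF u.2).2⟩
  exact div_of_triFree hs hT hS (hD s hT)

lemma perfectlyDivisible_of_div (h : ∀ s : Set V, s.Nonempty → Div G s) :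
    PerfectlyDivisible G := by
  intro s hs
  obtain ⟨P, hP, hperf, hlt⟩ := h s hs (fun _ => 1) fun _ => one_pos
  refine ⟨P, s \ P, Set.union_sdiff_cancel hP, Set.inter_sdiff_self P s,
    (isPerfect_induce_iff P).2 hperf, ?_⟩
  rwa [cliqueNumOn_eq_w, cliqueNumOn_eq_w]

end division

/-! ### Forbidden induced subgraphs -/

section forbidden
variable {V : Type*} {G : SimpleGraph V}

lemma containsInduced_of_lt {n : ℕ} {H : SimpleGraph (Fin n)} (f : Fin n → V)
    (hne : ∀ i j, i < j → f i ≠ f j) (hadj : ∀ i j, i < j → (G.Adj (f i) (f j) ↔ H.Adj i j)) :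
    ContainsInduced G H := by
  refine ⟨⟨f, fun i j hij => ?_⟩, fun i j => ?_⟩
  · by_contra h
    rcases lt_or_gt_of_ne h with h | h
    · exact hne i j h hij
    · exact hne j i h hij.symm
  · change G.Adj (f i) (f j) ↔ _
    rcases lt_trichotomy i j with h | rfl | h
    · exact hadj i j h
    · simp
    · rw [G.adj_comm, H.adj_comm]
      exact hadj j i h

lemma triFree_iff : IsFree G (SimpleGraph.cycleGraph 3) ↔ TriFree G := by
  constructor
  · intro h a b c hab hac hbc
    refine h (containsInduced_of_lt ![a, b, c] ?_ ?_)
    · intro i j hij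
      have := hab.ne; have := hac.ne; have := hbc.ne
      fin_cases i <;> fin_cases j <;> simp_all
    · intro i j hij
      fin_cases i <;> fin_cases j <;> simp_all [SimpleGraph.cycleGraph_three_eq_top]
  · rintro h ⟨f, hf⟩
    exact h (f 0) (f 1) (f 2) ((hf _ _).2 (by simp [SimpleGraph.cycleGraph_three_eq_top]))
      ((hf _ _).2 (by simp [SimpleGraph.cycleGraph_three_eq_top]))
      ((hf _ _).2 (by simp [SimpleGraph.cycleGraph_three_eq_top]))

lemma TriFree.isFree {β : Type*} {H : SimpleGraph β} (h : TriFree G) {a b c : β}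
    (hab : H.Adj a b) (hac : H.Adj a c) (hbc : H.Adj b c) : IsFree G H := by
  rintro ⟨f, hf⟩
  exact h _ _ _ ((hf _ _).2 hab) ((hf _ _).2 hac) ((hf _ _).2 hbc)

lemma isFree_iso {β γ : Type*} {H : SimpleGraph β} {H' : SimpleGraph γ} (e : H ≃g H')
    (h : IsFree G H) : IsFree G H' := by
  rintro ⟨f, hf⟩
  exact h ⟨e.toEquiv.toEmbedding.trans f, fun a b => (hf _ _).trans e.map_adj_iff⟩

lemma bullFree_of_isFree (h : IsFree G bull) : BullFree G := by
  intro a b c d e hab hac hbc had hbe hae hbd hcd hce hde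
  have n1 := hab.ne
  have n2 := hac.ne
  have n3 := hbc.ne
  have n4 := had.ne
  have n5 := hbe.ne
  have n6 : a ≠ e := fun h => hce (h ▸ hac.symm)
  have n7 : b ≠ d := fun h => hcd (h ▸ hbc.symm)
  have n8 : c ≠ d := fun h => hbd (h ▸ hbc)
  have n9 : c ≠ e := fun h => hae (h ▸ hac)
  have n10 : d ≠ e := fun h => hae (h ▸ had)
  refine h (containsInduced_of_lt ![a, b, c, d, e] ?_ ?_)
  · intro i j hij
    fin_cases i <;> fin_cases j <;> simp_all
  · intro i j hij
    fin_cases i <;> fin_cases j <;> simp_all [bull]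

lemma hammerFree_of_isFree (h : IsFree G hammer) : HammerFree G := by
  intro a b c d e hab hac hbc hcd hde had hbd hae hbe hce
  have n1 := hab.ne
  have n2 := hac.ne
  have n3 := hbc.ne
  have n4 : a ≠ d := fun h => hbd (h ▸ hab.symm)
  have n5 : a ≠ e := fun h => hbe (h ▸ hab.symm)
  have n6 : b ≠ d := fun h => had (h ▸ hab)
  have n7 : b ≠ e := fun h => hae (h ▸ hab)
  have n8 := hcd.ne
  have n9 : c ≠ e := fun h => hae (h ▸ hac)
  have n10 := hde.ne
  refine h (containsInduced_of_lt ![a, b, c, d, e] ?_ ?_)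
  · intro i j hij
    fin_cases i <;> fin_cases j <;> simp_all
  · intro i j hij
    fin_cases i <;> fin_cases j <;> simp_all [hammer]

lemma houseFree_of_isFree (h : IsFree G house) : HouseFree G := by
  intro a b c x d hab hac hbc hxa hxb hxc hdb hda hdc hxd
  have n1 := hab.ne
  have n2 := hac.ne
  have n3 := hbc.ne
  have n4 := hxa.ne
  have n5 : x ≠ b := fun h => hxc (h ▸ hbc)
  have n6 : x ≠ c := fun h => hxb (h ▸ hbc.symm)
  have n7 := hdb.ne
  have n8 : d ≠ a := fun h => hdc (h ▸ hac)
  have n9 : d ≠ c := fun h => hda (h ▸ hac.symm)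
  have n10 := hxd.ne
  -- the complementary path is `b x c d a`
  refine h (containsInduced_of_lt ![b, x, c, d, a] ?_ ?_)
  · intro i j hij
    fin_cases i <;> fin_cases j <;> simp_all [eq_comm]
  · intro i j hij
    fin_cases i <;> fin_cases j <;> simp_all [house, SimpleGraph.pathGraph_adj, G.adj_comm]

lemma diamondFree_of_isFree (h : IsFree G diamond) : DiamondFree G := by
  intro a b c d hab hac had hbc hbd hcd
  by_contra hcon
  have n1 := hab.ne
  have n2 := hac.ne
  have n3 := had.ne
  have n4 := hbc.ne
  have n5 := hbd.ne
  refine h (containsInduced_of_lt ![a, b, c, d] ?_ ?_)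
  · intro i j hij
    fin_cases i <;> fin_cases j <;> simp_all
  · intro i j hij
    fin_cases i <;> fin_cases j <;> simp_all [diamond]

end forbidden

end BullDiv

/-- For `H` one of house, hammer, diamond, `𝒞` the class of (bull, H)-free graphs and `𝒢`
a hereditary class, every graph in `𝒢 ∩ 𝒞` is perfectly divisible if and only if every
triangle-free graph in `𝒢` is perfectly divisible. -/
theorem bull_H_free_perfectlyDivisible_iff_triangleFree
    {β : Type} [Fintype β] (H : SimpleGraph β)
    (hH : Nonempty (H ≃g house) ∨ Nonempty (H ≃g hammer) ∨ Nonempty (H ≃g diamond))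
    (𝒢 : ∀ (V : Type) [Fintype V], SimpleGraph V → Prop)
    (hered : ∀ (V W : Type) [Fintype V] [Fintype W] (G : SimpleGraph V) (H' : SimpleGraph W),
        𝒢 V G → ContainsInduced G H' → 𝒢 W H') :
    (∀ (V : Type) [Fintype V] (G : SimpleGraph V),
        𝒢 V G → IsFree G bull → IsFree G H → PerfectlyDivisible G) ↔
    (∀ (V : Type) [Fintype V] (G : SimpleGraph V),
        𝒢 V G → IsFree G (SimpleGraph.cycleGraph 3) → PerfectlyDivisible G) := by
  classical
  constructor
  · intro h V _ G hG hT
    rw [BullDiv.triFree_iff] at hT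
    refine h V G hG (hT.isFree (a := 0) (b := 1) (c := 2) ?_ ?_ ?_) ?_
    iterate 3 simp [bull]
    rcases hH with ⟨⟨e⟩⟩ | ⟨⟨e⟩⟩ | ⟨⟨e⟩⟩
    · refine BullDiv.isFree_iso e.symm (hT.isFree (a := 0) (b := 2) (c := 4) ?_ ?_ ?_)
      all_goals simp [house, SimpleGraph.pathGraph_adj]
    · refine BullDiv.isFree_iso e.symm (hT.isFree (a := 0) (b := 1) (c := 2) ?_ ?_ ?_)
      all_goals simp [hammer]
    · refine BullDiv.isFree_iso e.symm (hT.isFree (a := 0) (b := 1) (c := 2) ?_ ?_ ?_)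
      all_goals simp [diamond]
  · intro h V _ G hG hB hHG
    refine BullDiv.perfectlyDivisible_of_div
      (BullDiv.div_all (BullDiv.bullFree_of_isFree hB) ?_ fun s hs => ?_)
    · rcases hH with ⟨⟨e⟩⟩ | ⟨⟨e⟩⟩ | ⟨⟨e⟩⟩
      · exact Or.inl (BullDiv.houseFree_of_isFree (BullDiv.isFree_iso e hHG))
      · exact Or.inr (Or.inl (BullDiv.hammerFree_of_isFree (BullDiv.isFree_iso e hHG)))
      · exact Or.inr (Or.inr (BullDiv.diamondFree_of_isFree (BullDiv.isFree_iso e hHG)))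
    · exact h s (G.induce s) (hered V s G (G.induce s) hG
        ⟨Function.Embedding.subtype _, fun _ _ => Iff.rfl⟩) (BullDiv.triFree_iff.2 hs)
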